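/- arXiv:1506.07420 — 2 statements merged into one kernel-verified Lean document; each statement's English description precedes it below -/
import Mathlib

section
/- Let V(x) = (1/256)·sech²(x/(8√2)) + 24·tanh(x/(8√2))·cosh²(x/(8√2))·tanh(x/√2)·sech²(x/√2) and Z₁(x) = 2^(-3/4)·√3·tanh(x/√2)·sech(x/√2)·cosh(x/(8√2)). There exists κ > 0 such that for every odd differentiable function w : ℝ → ℝ with w and w' square integrable on ℝ and satisfying ∫_ℝ w(x)·Z₁(x) dx = 0, one has ∫_ℝ ( w'(x)² - V(x)·w(x)² ) dx ≥ κ·∫_ℝ w'(x)² dx. -/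
open MeasureTheory

noncomputable def sech (x : ℝ) : ℝ := 1 / Real.cosh x

noncomputable def Vpot (x : ℝ) : ℝ :=
  (1 / 256) * sech (x / (8 * Real.sqrt 2)) ^ 2
    + 24 * Real.tanh (x / (8 * Real.sqrt 2)) * Real.cosh (x / (8 * Real.sqrt 2)) ^ 2
      * Real.tanh (x / Real.sqrt 2) * sech (x / Real.sqrt 2) ^ 2

noncomputable def Z1 (x : ℝ) : ℝ :=
  (2 : ℝ) ^ (-(3 : ℝ) / 4) * Real.sqrt 3 * Real.tanh (x / Real.sqrt 2) * sech (x / Real.sqrt 2)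
    * Real.cosh (x / (8 * Real.sqrt 2))

namespace KP

def ev : List ℤ → ℝ → ℝ
  | [], _ => 0
  | c :: p, v => (c : ℝ) + v * ev p v

def add : List ℤ → List ℤ → List ℤ
  | [], q => q
  | p, [] => p
  | a :: p, b :: q => (a + b) :: add p q

def smul (k : ℤ) : List ℤ → List ℤ
  | [] => []
  | c :: p => (k * c) :: smul k p

def mul : List ℤ → List ℤ → List ℤ
  | [], _ => []
  | c :: p, q => add (smul c q) (0 :: mul p q)

def pow (p : List ℤ) : ℕ → List ℤ
  | 0 => [1]
  | n + 1 => mul p (pow p n)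

def mon : ℕ → List ℤ
  | 0 => [1]
  | n + 1 => 0 :: mon n

/-- `pas c l` represents `c + (1 + t) * l(t)`. -/
def pas (c : ℤ) : List ℤ → List ℤ
  | [] => [c]
  | a :: l => (c + a) :: pas a l

/-- Substitution `v = 1 / (1 + t)` (after clearing denominators). -/
def go (acc : List ℤ) : List ℤ → List ℤ
  | [] => acc
  | c :: p => go (pas c acc) p

/-- Degree elevation. -/
def pad : ℕ → List ℤ → List ℤ
  | n, c :: p => c :: pad n p
  | n, [] => List.replicate n 0

def nonneg : List ℤ → Bool
  | [] => true
  | c :: p => decide (0 ≤ c) && nonneg p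

theorem ev_add (p q : List ℤ) (v : ℝ) : ev (add p q) v = ev p v + ev q v := by
  induction p generalizing q with
  | nil => simp [add, ev]
  | cons a p ih =>
    cases q with
    | nil => simp [add, ev]
    | cons b q => simp [add, ev, ih]; ring

theorem ev_smul (k : ℤ) (p : List ℤ) (v : ℝ) : ev (smul k p) v = k * ev p v := by
  induction p with
  | nil => simp [smul, ev]
  | cons a p ih => simp [smul, ev, ih]; ring

theorem ev_mul (p q : List ℤ) (v : ℝ) : ev (mul p q) v = ev p v * ev q v := by
  induction p with
  | nil => simp [mul, ev]
  | cons a p ih => simp [mul, ev, ih, ev_add, ev_smul]; ring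

theorem ev_pow (p : List ℤ) (n : ℕ) (v : ℝ) : ev (pow p n) v = ev p v ^ n := by
  induction n with
  | zero => simp [pow, ev]
  | succ n ih => simp [pow, ev_mul, ih]; ring

theorem ev_mon (n : ℕ) (v : ℝ) : ev (mon n) v = v ^ n := by
  induction n with
  | zero => simp [mon, ev]
  | succ n ih => simp [mon, ev, ih]; ring

theorem ev_nonneg (p : List ℤ) (hp : nonneg p = true) {t : ℝ} (ht : 0 ≤ t) : 0 ≤ ev p t := by
  induction p with
  | nil => simp [ev]
  | cons a p ih =>
    simp only [nonneg, Bool.and_eq_true, decide_eq_true_eq] at hp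
    have h1 : (0 : ℝ) ≤ a := by exact_mod_cast hp.1
    have h2 := ih hp.2
    simp only [ev]; positivity

theorem ev_pas (c : ℤ) (l : List ℤ) (t : ℝ) : ev (pas c l) t = c + (1 + t) * ev l t := by
  induction l generalizing c with
  | nil => simp [pas, ev]
  | cons a l ih => simp [pas, ev, ih]; ring

theorem ev_go (acc p : List ℤ) (v t : ℝ) (h : v * (1 + t) = 1) :
    ev (go acc p) t = (1 + t) ^ p.length * (ev acc t + v * ev p v) := by
  induction p generalizing acc with
  | nil => simp [go, ev]
  | cons a p ih =>
    simp only [go, ih, ev_pas, List.length_cons, ev, pow_succ]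
    linear_combination (-(1 + t) ^ p.length * (a + v * ev p v)) * h

theorem ev_pad (n : ℕ) (p : List ℤ) (v : ℝ) : ev (pad n p) v = ev p v := by
  induction p with
  | nil =>
    induction n with
    | zero => simp [pad]
    | succ n ih =>
      simp only [pad, ev] at ih ⊢
      simp [List.replicate_succ, ev, ih]
  | cons a p ih => simp [pad, ev, ih]

theorem check (p : List ℤ) (n : ℕ) (hp : nonneg (go [] (pad n p)) = true)
    (v : ℝ) (h1 : 0 < v) (h2 : v ≤ 1) : 0 ≤ ev p v := by
  have ht0 : 0 ≤ 1 / v - 1 := by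
    rw [sub_nonneg, le_div_iff₀ h1]; linarith
  have h5 := ev_go [] (pad n p) v (1 / v - 1) (by field_simp; ring)
  have h6 := ev_nonneg _ hp ht0
  rw [h5, ev_pad] at h6
  have h7 : 0 < (1 + (1 / v - 1)) ^ (pad n p).length := by positivity
  have h8 := nonneg_of_mul_nonneg_right h6 h7
  simp only [ev, zero_add] at h8
  exact nonneg_of_mul_nonneg_right h8 h1

def pE : List ℤ := [1, 0, 1]
def pD : List ℤ := add [1] (mon 16)
def pF : List ℤ := [1, 0, -1]
def pG : List ℤ := [1, 0, 1, 0, 1, 0, 1, 0, 1, 0, 1, 0, 1, 0, 1]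
def pN : List ℤ := mul pF pG
/-- numerator of the function `h` -/
def pM : List ℤ := add (mul pG (mul (add (pow pD 2) (pow pN 2)) pE)) (pow pD 3)

def pA : List ℤ :=
  add (smul 320000 (mul pG (mul (mon 5) (mul (pow pE 4) (pow pD 4)))))
  (add (smul (-972800) (mul pG (mul (add (pow pD 2) (smul (-3) (pow pN 2)))
      (mul (mon 14) (mul pD (pow pE 3))))))
  (add (smul 7600 (pow pD 6))
  (add (smul (-1919) (mul (pow pD 3) pM))
    (smul (-2947584) (mul (mon 12) (mul pF (mul pE (mul pF (mul pG (mul pM (pow pE 2)))))))))))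

/- `B / x`, multiplied by `10^8` -/
def pB : List ℤ :=
  add (mul (pow pM 2) (mul (pow pD 5)
      (add (smul 2166000 (mul (mon 4) (pow pE 4)))
        (smul 866400000 (mul (pow pF 6) (add (smul 6 (mon 2)) (pow pF 2)))))))
  (add (smul (-1600000000) (mul (mon 2) (mul (pow pF 2) (mul (pow pE 4) (pow pD 11)))))
    (smul (-6859) (mul pG (mul (mon 5) (mul (pow pM 3)
      (pow (add (mul (mon 2) (pow pE 4)) (smul (-2400) (pow pF 6))) 2))))))

set_option maxRecDepth 100000 in
theorem cA : nonneg (go [] (pad 100 pA)) = true := by decide +kernel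

set_option maxRecDepth 100000 in
theorem cB : nonneg (go [] (pad 0 pB)) = true := by decide +kernel

end KP

namespace KP
open Real

noncomputable def H (s : ℝ) : ℝ := 19/100 * (tanh (8*s) + tanh (8*s)^3 + tanh s)
noncomputable def H1 (s : ℝ) : ℝ :=
  19/100 * (8 * (1 + 3 * tanh (8*s)^2) * sech (8*s)^2 + sech s^2)
noncomputable def H2 (s : ℝ) : ℝ :=
  19/100 * (64 * (4 * tanh (8*s) - 12 * tanh (8*s)^3) * sech (8*s)^2 - 2 * tanh s * sech s^2)
noncomputable def Pf (s : ℝ) : ℝ := 1/40 / tanh s^3 - 240 * tanh s^3 * cosh s^2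
noncomputable def Pf1 (s : ℝ) : ℝ :=
  -(3/40 * sech s^2 / tanh s^4) - 240 * (3 * tanh s^2 + 2 * tanh s^4 * cosh s^2)
noncomputable def Vs (s : ℝ) : ℝ :=
  (1 / 256) * sech s ^ 2 + 24 * tanh s * cosh s ^ 2 * tanh (8*s) * sech (8*s) ^ 2
noncomputable def Zs (s : ℝ) : ℝ := 1/2 * (tanh (8*s) * sech (8*s) * cosh s)

theorem tanh_pos' {s : ℝ} (hs : 0 < s) : 0 < tanh s := by
  rw [tanh_eq_sinh_div_cosh]
  exact div_pos (sinh_pos_iff.2 hs) (cosh_pos s)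

theorem sech_pos (s : ℝ) : 0 < sech s := by
  unfold sech; have := cosh_pos s; positivity

theorem tanh_lt_one' (s : ℝ) : tanh s < 1 := by
  rw [tanh_eq_sinh_div_cosh, div_lt_one (cosh_pos s)]; exact sinh_lt_cosh s

theorem sech_sq (s : ℝ) : sech s ^ 2 = 1 - tanh s ^ 2 := by
  unfold sech
  rw [tanh_eq_sinh_div_cosh]
  have := cosh_pos s
  have h := cosh_sq s
  field_simp
  linarith

theorem hasDerivAt_tanh' (s : ℝ) : HasDerivAt tanh (sech s ^ 2) s := by
  have h0 := (cosh_pos s).ne'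
  have h := (hasDerivAt_sinh s).div (hasDerivAt_cosh s) h0
  have e : tanh = fun x => sinh x / cosh x := by
    funext x; exact tanh_eq_sinh_div_cosh x
  rw [e]
  convert! h using 1
  unfold sech
  have h1 := cosh_sq s
  field_simp
  linarith

theorem hasDerivAt_sech (s : ℝ) : HasDerivAt sech (-(tanh s * sech s)) s := by
  have h0 := (cosh_pos s).ne'
  have h := (hasDerivAt_const s (1:ℝ)).div (hasDerivAt_cosh s) h0
  convert! h using 1
  rw [tanh_eq_sinh_div_cosh]
  unfold sech
  field_simp
  ring

theorem hasDerivAt_T8 (s : ℝ) : HasDerivAt (fun s => tanh (8*s)) (8 * sech (8*s)^2) s := by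
  have h := (hasDerivAt_tanh' (8*s)).comp s ((hasDerivAt_id s).const_mul 8)
  convert! h using 1
  simp; ring

theorem hasDerivAt_S8 (s : ℝ) :
    HasDerivAt (fun s => sech (8*s)) (-(8 * (tanh (8*s) * sech (8*s)))) s := by
  have h := (hasDerivAt_sech (8*s)).comp s ((hasDerivAt_id s).const_mul 8)
  convert! h using 1
  simp; ring

theorem hasDerivAt_H (s : ℝ) : HasDerivAt H (H1 s) s := by
  have h := (((hasDerivAt_T8 s).add ((hasDerivAt_T8 s).pow 3)).add
    (hasDerivAt_tanh' s)).const_mul (19/100)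
  convert! h using 1
  simp only [H1]; push_cast; ring

theorem hasDerivAt_H1 (s : ℝ) : HasDerivAt H1 (H2 s) s := by
  have h := (((((((hasDerivAt_T8 s).pow 2).const_mul 3).const_add 1).const_mul 8).mul
    ((hasDerivAt_S8 s).pow 2)).add ((hasDerivAt_sech s).pow 2)).const_mul (19/100)
  convert! h using 1
  simp only [H2, Pi.pow_apply]; push_cast
  linear_combination (-(19/100*8*8*6*tanh (8*s) * sech (8*s)^2)) * sech_sq (8*s)

theorem hasDerivAt_Pf {s : ℝ} (hs : 0 < s) : HasDerivAt Pf (Pf1 s) s := by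
  have ht := (tanh_pos' hs).ne'
  have hc := (cosh_pos s).ne'
  have h := ((hasDerivAt_const s ((1:ℝ)/40)).div ((hasDerivAt_tanh' s).pow 3)
    (by simpa using ht)).sub
    ((((hasDerivAt_tanh' s).pow 3).const_mul 240).mul ((hasDerivAt_cosh s).pow 2))
  convert! h using 1
  simp only [Pf1]
  have e : sinh s = tanh s * cosh s := by rw [tanh_eq_sinh_div_cosh]; field_simp
  have e2 : sech s = 1 / cosh s := rfl
  rw [e, e2]
  simp only [Pi.pow_apply]
  push_cast
  field_simp
  ring

theorem ev_pE (v : ℝ) : ev pE v = 1 + v^2 := by simp [pE, ev]; ring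
theorem ev_pD (v : ℝ) : ev pD v = 1 + v^16 := by simp [pD, ev_add, ev_mon, ev]
theorem ev_pF (v : ℝ) : ev pF v = 1 - v^2 := by simp [pF, ev]; ring
theorem ev_pFG (v : ℝ) : ev pF v * ev pG v = 1 - v^16 := by simp [pF, pG, ev]; ring
theorem ev_pG_pos {v : ℝ} (hv : 0 < v) : 0 < ev pG v := by simp [pG, ev]; positivity

theorem atoms {s : ℝ} (hs : 0 < s) : ∃ v D E F G : ℝ, 0 < v ∧ v < 1 ∧ 0 < D ∧ 0 < E ∧ 0 < F ∧
    0 < G ∧ D = ev pD v ∧ E = ev pE v ∧ F = ev pF v ∧ G = ev pG v ∧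
    tanh s = F / E ∧ cosh s = E / (2 * v) ∧ sech s = 2 * v / E ∧
    tanh (8*s) = F * G / D ∧ sech (8*s) = 2 * v^8 / D := by
  have hv0 := exp_pos (-s)
  have hv1 : exp (-s) < 1 := by rw [exp_lt_one_iff]; linarith
  have e1 : exp s = 1 / exp (-s) := by rw [exp_neg]; simp
  have e3 : exp (-(8*s)) = exp (-s)^8 := by rw [← exp_nat_mul]; congr 1; push_cast; ring
  have e2 : exp (8*s) = 1 / exp (-s)^8 := by rw [← e3, exp_neg]; simp
  refine ⟨exp (-s), _, _, _, _, hv0, hv1, ?_, ?_, ?_, ev_pG_pos hv0, rfl, rfl, rfl, rfl, ?_⟩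
  · rw [ev_pD]; positivity
  · rw [ev_pE]; positivity
  · rw [ev_pF]
    have := mul_lt_mul'' hv1 hv1 hv0.le hv0.le
    nlinarith
  rw [ev_pFG, ev_pE, ev_pF, ev_pD, tanh_eq_sinh_div_cosh, tanh_eq_sinh_div_cosh]
  unfold sech
  rw [cosh_eq, cosh_eq, sinh_eq, sinh_eq, e3, e2, e1]
  generalize exp (-s) = v at *
  have hv := hv0.ne'
  have : 1 + v^2 ≠ 0 := by positivity
  have : 1 + v^16 ≠ 0 := by positivity
  refine ⟨?_, ?_, ?_, ?_, ?_⟩ <;> field_simp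

theorem condA {s : ℝ} (hs : 0 < s) : H2 s / 128 + 101/100 * Vs s * H s ≤ Zs s := by
  obtain ⟨v, D, E, F, G, hv0, hv1, hD, hE, hF, hG, eD, eE, eF, eG, h1, h2, h3, h4, h5⟩ := atoms hs
  have key := check pA 100 cA v hv0 hv1.le
  simp only [pA, pM, pN, ev_add, ev_smul, ev_mul, ev_pow, ev_mon, ← eD, ← eE, ← eF, ← eG] at key
  push_cast at key
  rw [← sub_nonneg]
  unfold H2 Vs H Zs
  rw [h1, h2, h3, h4, h5]
  have hp := mul_nonneg (show 0 ≤ F * v^2 / (640000 * D^6 * E^3) by positivity) key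
  refine le_of_le_of_eq hp ?_
  clear hp key eD eE eF eG h1 h2 h3 h4 h5
  field_simp
  ring

theorem condB {s : ℝ} (hs : 0 < s) :
    Pf1 s / 8 + 2 * Zs s * H s * Pf s^2 + 1 / H s^2 ≤ 0 := by
  obtain ⟨v, D, E, F, G, hv0, hv1, hD, hE, hF, hG, eD, eE, eF, eG, h1, h2, h3, h4, h5⟩ := atoms hs
  have key := check pB 0 cB v hv0 hv1.le
  have eM : ev pM v = G * ((D^2 + (F*G)^2) * E) + D^3 := by
    simp only [pM, pN, ev_add, ev_mul, ev_pow, ← eD, ← eE, ← eF, ← eG]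
  have hM : 0 < ev pM v := by rw [eM]; positivity
  have hH : H s = 19/100 * (F * ev pM v / (D^3 * E)) := by
    rw [eM]; unfold H; rw [h1, h4]; field_simp
  simp only [pB, ev_add, ev_smul, ev_mul, ev_pow, ev_mon, ← eD, ← eE, ← eF, ← eG] at key
  push_cast at key
  generalize ev pM v = M at *
  rw [← neg_nonneg, hH]
  unfold Pf1 Pf Zs
  rw [h1, h2, h3, h4, h5]
  have hp := mul_nonneg (show 0 ≤ (1/(16*10^8)) / (E^4 * F^2 * v^2 * D^11) / (19/100 * (F * M / (D^3 * E)))^2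
    by positivity) key
  refine le_of_le_of_eq hp ?_
  clear hp key eD eE eF eG h1 h2 h3 h4 h5 eM hH
  field_simp
  ring

end KP

namespace KP
open Real Filter Topology Set

noncomputable def Gf (h h1 P w W : ℝ → ℝ) (x : ℝ) : ℝ :=
  h1 x / h x * w x ^ 2 + 2 * W x * w x / h x + P x * W x ^ 2

theorem core (h h1 h2 Z P P1 V w w1 W : ℝ → ℝ)
    (dh : ∀ x, HasDerivAt h (h1 x) x) (dh1 : ∀ x, HasDerivAt h1 (h2 x) x)
    (dP : ∀ x, 0 < x → HasDerivAt P (P1 x) x)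
    (dw : ∀ x, HasDerivAt w (w1 x) x) (dW : ∀ x, HasDerivAt W (-(w x * Z x)) x)
    (hh : ∀ x, 0 < x → 0 < h x) (hZ : ∀ x, 0 < x → 0 ≤ Z x)
    (cA : ∀ x, 0 < x → h2 x + V x * h x ≤ Z x)
    (cB : ∀ x, 0 < x → P1 x + Z x * h x * P x ^ 2 + 1 / h x ^ 2 ≤ 0)
    (w0 : w 0 = 0) (W0 : W 0 = 0)
    (hlim : Tendsto (Gf h h1 P w W) (𝓝[>] 0) (𝓝 0))
    (R : ℝ) (hR : 0 < R)
    (hint : MeasureTheory.IntegrableOn (fun x => w1 x ^ 2 - V x * w x ^ 2) (Icc 0 R)) :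
    Gf h h1 P w W R ≤ ∫ x in (0:ℝ)..R, (w1 x ^ 2 - V x * w x ^ 2) := by
  have g0 : Gf h h1 P w W 0 = 0 := by simp [Gf, w0, W0]
  have hd : ∀ x, 0 < x → HasDerivAt (Gf h h1 P w W)
      ((h2 x * h x - h1 x * h1 x) / h x ^ 2 * w x ^ 2 + h1 x / h x * (2 * w x * w1 x)
        + (2 * (-(w x * Z x) * w x + W x * w1 x) * h x - 2 * W x * w x * h1 x) / h x ^ 2
        + (P1 x * W x ^ 2 + P x * (2 * W x * -(w x * Z x)))) x := by
    intro x hx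
    have hne := (hh x hx).ne'
    have e := ((((dh1 x).div (dh x) hne).mul ((dw x).pow 2)).add
      ((((dW x).const_mul 2).mul (dw x)).div (dh x) hne)).add ((dP x hx).mul ((dW x).pow 2))
    convert! e using 1
    simp only [Pi.pow_apply, Pi.div_apply, Pi.mul_apply]
    push_cast
    ring
  have := intervalIntegral.sub_le_integral_of_hasDeriv_right_of_le (g := Gf h h1 P w W) hR.le ?_
    (fun x hx => (hd x hx.1).hasDerivWithinAt) hint ?_
  · rwa [g0, sub_zero] at this
  · intro x hx
    rcases hx.1.eq_or_lt with rfl | hx0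
    · have : ContinuousWithinAt (Gf h h1 P w W) (Ioi 0) 0 := by
        unfold ContinuousWithinAt; rw [g0]; exact hlim
      exact (continuousWithinAt_Ioi_iff_Ici.1 this).mono Icc_subset_Ici_self
    · exact (hd x hx0).continuousAt.continuousWithinAt
  · intro x hx
    have hp := hh x hx.1
    have hz := hZ x hx.1
    have a1 := cA x hx.1
    have a2 := cB x hx.1
    have n1 := sq_nonneg (w1 x - h1 x * w x / h x - W x / h x)
    have n2 : 0 ≤ w x ^ 2 / h x * (Z x - (h2 x + V x * h x)) :=
      mul_nonneg (by positivity) (by linarith)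
    have n3 : 0 ≤ Z x * h x * (w x / h x + P x * W x) ^ 2 := by positivity
    have n4 : 0 ≤ W x ^ 2 * (-(P1 x + Z x * h x * P x ^ 2 + 1 / h x ^ 2)) :=
      mul_nonneg (by positivity) (by linarith)
    rw [← sub_nonneg]
    refine le_of_le_of_eq (add_nonneg (add_nonneg n1 n2) (add_nonneg n3 n4)) ?_
    clear n1 n2 n3 n4 a1 a2 hd
    field_simp
    ring

theorem lim0 {f : ℝ → ℝ} {f' : ℝ} (hf : HasDerivAt f f' 0) (h0 : f 0 = 0) :
    Tendsto (fun x => f x / x) (𝓝[>] 0) (𝓝 f') := by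
  have := hf.tendsto_slope_zero_right
  simpa [h0, div_eq_inv_mul] using this

theorem limG0 (h h1 P w w1 W Z : ℝ → ℝ) (z p : ℝ)
    (dh : ∀ x, HasDerivAt h (h1 x) x) (ch1 : ContinuousAt h1 0) (h0 : h 0 = 0) (h10 : h1 0 ≠ 0)
    (dw : ∀ x, HasDerivAt w (w1 x) x) (w0 : w 0 = 0)
    (dW : ∀ x, HasDerivAt W (-(w x * Z x)) x) (W0 : W 0 = 0)
    (dZ : HasDerivAt Z z 0) (Z0 : Z 0 = 0)
    (hP : Tendsto (fun x => P x * x ^ 3) (𝓝[>] 0) (𝓝 p)) :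
    Tendsto (Gf h h1 P w W) (𝓝[>] 0) (𝓝 0) := by
  have lh := lim0 (dh 0) h0
  have lw := lim0 (dw 0) w0
  have lZ := lim0 dZ Z0
  have lx : Tendsto (fun x : ℝ => x) (𝓝[>] 0) (𝓝 0) :=
    tendsto_id.mono_left nhdsWithin_le_nhds
  have lh1 : Tendsto h1 (𝓝[>] 0) (𝓝 (h1 0)) := ch1.tendsto.mono_left nhdsWithin_le_nhds
  have pos : ∀ᶠ x : ℝ in 𝓝[>] 0, 0 < x := eventually_mem_nhdsWithin
  have lW : Tendsto (fun x => W x / x ^ 3) (𝓝[>] 0) (𝓝 (-(w1 0 * z) / 3)) := by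
    refine HasDerivAt.lhopital_zero_nhdsGT (f' := fun x => -(w x * Z x)) (g' := fun x => 3 * x ^ 2)
      (Eventually.of_forall dW) (Eventually.of_forall fun x => ?_) ?_ ?_ ?_ ?_
    · simpa using hasDerivAt_pow 3 x
    · filter_upwards [pos] with x hx; positivity
    · have := (dW 0).continuousAt.tendsto.mono_left (nhdsWithin_le_nhds (s := Ioi 0))
      rwa [W0] at this
    · simpa using lx.pow 3
    · refine (((lw.mul lZ).neg).div_const 3).congr' ?_
      filter_upwards [pos] with x hx
      field_simp
  have t1 := (lh1.div lh h10).mul ((lw.pow 2).mul lx)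
  have t2 := ((lW.mul lw).div lh h10).mul ((lx.pow 3).const_mul 2)
  have t3 := hP.mul ((lW.pow 2).mul (lx.pow 3))
  have := (t1.add t2).add t3
  simp only [mul_zero, ne_eq, OfNat.ofNat_ne_zero, not_false_eq_true, zero_pow, add_zero] at this
  refine this.congr' ?_
  filter_upwards [pos, lh.eventually_ne h10] with x hx hne
  have : h x ≠ 0 := fun h => hne (by simp [h])
  simp only [Gf, Pi.div_apply]
  field_simp
end KP

namespace KP
open Real Filter Topology Set

theorem Zs_nonneg {s : ℝ} (hs : 0 < s) : 0 ≤ Zs s := by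
  have h1 := tanh_pos' (show 0 < 8 * s by linarith)
  have h2 := sech_pos (8 * s)
  have h3 := cosh_pos s
  unfold Zs; positivity

theorem Zs_bound {s : ℝ} (hs : 0 < s) : Zs s ≤ exp (-7 * s) := by
  have h1 := tanh_pos' (show 0 < 8 * s by linarith)
  have h2 := sech_pos (8 * s)
  have h3 := cosh_pos s
  have h4 := tanh_lt_one' (8 * s)
  have e1 : sech (8 * s) ≤ 2 * exp (-(8 * s)) := by
    unfold sech
    rw [div_le_iff₀ (cosh_pos _), cosh_eq]
    have : exp (-(8*s)) * exp (8*s) = 1 := by rw [← exp_add]; simp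
    nlinarith [exp_pos (-(8*s))]
  have e2 : cosh s ≤ exp s := by
    rw [cosh_eq]
    have : exp (-s) ≤ exp s := exp_le_exp.2 (by linarith)
    linarith
  have e3 : tanh (8*s) * sech (8*s) * cosh s ≤ 1 * (2 * exp (-(8 * s))) * exp s := by
    gcongr
  have e4 : exp (-7 * s) = exp (-(8*s)) * exp s := by rw [← exp_add]; congr 1; ring
  unfold Zs
  rw [e4]; linarith

theorem half_le_tanh {s : ℝ} (hs : 1 ≤ s) : 1/2 ≤ tanh s := by
  rw [tanh_eq_sinh_div_cosh, le_div_iff₀ (cosh_pos s), cosh_eq, sinh_eq]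
  have h1 : s + 1 ≤ exp s := add_one_le_exp s
  have h2 : exp (-s) * exp s = 1 := by rw [← exp_add]; simp
  have h3 := exp_pos (-s)
  nlinarith

theorem H_pos {s : ℝ} (hs : 0 < s) : 0 < H s := by
  have h1 := tanh_pos' (show 0 < 8 * s by linarith)
  have h2 := tanh_pos' hs
  unfold H; positivity

theorem H1_pos (s : ℝ) : 0 < H1 s := by
  have h2 := sech_pos (8 * s)
  have h3 := sech_pos s
  unfold H1; positivity

theorem H_lower {s : ℝ} (hs : 1 ≤ s) : 19/200 ≤ H s := by
  have h1 := tanh_pos' (show 0 < 8 * s by linarith)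
  have h2 := half_le_tanh hs
  have h3 : 0 < tanh (8*s) ^ 3 := by positivity
  unfold H; linarith

theorem Pf_bound {s : ℝ} (hs : 1 ≤ s) : |Pf s| ≤ 241 * exp (2 * s) := by
  have h2 := half_le_tanh hs
  have h0 : 0 < tanh s := by linarith
  have h3 := (tanh_lt_one' s).le
  have e2 : cosh s ≤ exp s := by
    rw [cosh_eq]
    have : exp (-s) ≤ exp s := exp_le_exp.2 (by linarith)
    linarith
  have hc := cosh_pos s
  have e4 : exp (2 * s) = exp s ^ 2 := by rw [← exp_nat_mul]; norm_num
  have e1 : 1 ≤ exp s := one_le_exp (by linarith)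
  have b1 : 1/40 / tanh s ^ 3 ≤ 1 := by
    rw [div_le_one (by positivity)]
    have : (1/2 : ℝ) ^ 3 ≤ tanh s ^ 3 := by gcongr
    linarith
  have b2 : tanh s ^ 3 * cosh s ^ 2 ≤ 1 ^ 3 * exp s ^ 2 := by gcongr
  have b3 : 0 < 1/40 / tanh s ^ 3 := by positivity
  have b4 : 0 < tanh s ^ 3 * cosh s ^ 2 := by positivity
  unfold Pf
  rw [e4, abs_le]
  constructor <;> nlinarith

theorem limGinf (h P w W Z : ℝ → ℝ) (a c C : ℝ) (ha : 0 < a) (hc : 0 < c)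
    (dW : ∀ x, HasDerivAt W (-(w x * Z x)) x)
    (lw : Tendsto w atTop (𝓝 0)) (lW : Tendsto W atTop (𝓝 0))
    (bZ : ∀ᶠ x in atTop, |Z x| ≤ exp (-7 * (a * x)))
    (bh : ∀ᶠ x in atTop, c ≤ h x)
    (bP : ∀ᶠ x in atTop, |P x| ≤ C * exp (2 * (a * x))) :
    Tendsto (fun x => 2 * W x * w x / h x + P x * W x ^ 2) atTop (𝓝 0) := by
  have lax : Tendsto (fun x => a * x) atTop atTop := tendsto_id.const_mul_atTop ha
  have dE : ∀ x, HasDerivAt (fun x => exp (-(a * x))) (exp (-(a * x)) * -(a * 1)) x := fun x =>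
    (((hasDerivAt_id x).const_mul a).neg).exp
  have l1 : Tendsto (fun x => W x / exp (-(a * x))) atTop (𝓝 0) := by
    refine HasDerivAt.lhopital_zero_atTop (Eventually.of_forall dW) (Eventually.of_forall dE)
      (Eventually.of_forall fun x => ?_) lW ?_ ?_
    · have := exp_pos (-(a * x)); simp [ha.ne']
    · exact tendsto_exp_neg_atTop_nhds_zero.comp lax
    · have := (lw.abs).div_const a
      rw [abs_zero, zero_div] at this
      refine squeeze_zero_norm' ?_ this
      filter_upwards [bZ, eventually_ge_atTop 0] with x hx hx0
      have hp := exp_pos (-(a * x))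
      have : exp (-7 * (a * x)) ≤ exp (-(a * x)) := by
        apply exp_le_exp.2; have : 0 ≤ a * x := by positivity
        linarith
      rw [norm_eq_abs, abs_div, abs_neg, abs_mul, abs_mul, abs_neg, mul_one, abs_of_pos hp,
        abs_of_pos ha, div_le_div_iff₀ (by positivity) ha]
      have : |w x| * |Z x| ≤ |w x| * exp (-(a*x)) := by gcongr; linarith
      nlinarith
  have k1 : Tendsto (fun x => 2 * W x * w x / h x) atTop (𝓝 0) := by
    have := ((lW.mul lw).abs.const_mul 2).div_const c
    simp only [mul_zero, abs_zero, zero_div] at this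
    refine squeeze_zero_norm' ?_ this
    filter_upwards [bh] with x hx
    have : 0 < h x := by linarith
    rw [norm_eq_abs, abs_div, mul_assoc, abs_mul 2, abs_of_pos this, abs_two]
    gcongr
  have k2 : Tendsto (fun x => P x * W x ^ 2) atTop (𝓝 0) := by
    have := (l1.pow 2).const_mul C
    simp only [ne_eq, OfNat.ofNat_ne_zero, not_false_eq_true, zero_pow, mul_zero] at this
    refine squeeze_zero_norm' ?_ this
    filter_upwards [bP] with x hx
    have e : exp (2 * (a * x)) = 1 / exp (-(a*x)) ^ 2 := by
      rw [← exp_nat_mul, one_div, ← exp_neg]; congr 1; push_cast; ring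
    rw [norm_eq_abs, abs_mul, abs_of_nonneg (sq_nonneg (W x))]
    calc |P x| * W x ^ 2 ≤ C * exp (2 * (a * x)) * W x ^ 2 := by gcongr
      _ = _ := by rw [e, div_pow]; ring
  simpa using k1.add k2

noncomputable def aa : ℝ := 1 / (8 * √2)
theorem aa_pos : 0 < aa := by unfold aa; positivity
theorem aa_sq : aa ^ 2 = 1 / 128 := by
  unfold aa; rw [div_pow, mul_pow, sq_sqrt (by norm_num)]; norm_num
theorem e1 (x : ℝ) : x / (8 * √2) = aa * x := by unfold aa; ring
theorem e2 (x : ℝ) : x / √2 = 8 * (aa * x) := by unfold aa; ring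
theorem V_eq (x : ℝ) : Vpot x = Vs (aa * x) := by unfold Vpot Vs; rw [e1, e2]
theorem Z_eq (x : ℝ) : Z1 x = (2 * ((2 : ℝ) ^ (-(3 : ℝ) / 4) * √3)) * Zs (aa * x) := by
  unfold Z1 Zs; rw [e1, e2]; ring

theorem sech_neg (x : ℝ) : sech (-x) = sech x := by simp [sech]
theorem Zs_neg (s : ℝ) : Zs (-s) = - Zs s := by
  unfold Zs; rw [mul_neg, tanh_neg, sech_neg, cosh_neg]; ring
theorem Vs_neg (s : ℝ) : Vs (-s) = Vs s := by
  unfold Vs; rw [mul_neg, tanh_neg, tanh_neg, sech_neg, sech_neg, cosh_neg]; ring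

theorem tanh_diff : Differentiable ℝ tanh := fun s => (hasDerivAt_tanh' s).differentiableAt
theorem sech_diff : Differentiable ℝ sech := fun s => (hasDerivAt_sech s).differentiableAt
theorem Zs_diff : Differentiable ℝ Zs := by
  intro s
  unfold Zs
  exact ((((hasDerivAt_T8 s).differentiableAt).mul (hasDerivAt_S8 s).differentiableAt).mul
    (hasDerivAt_cosh s).differentiableAt).const_mul _
theorem Vs_cont : Continuous Vs := by
  have h1 := tanh_diff.continuous
  have h2 := sech_diff.continuous
  unfold Vs; fun_prop

theorem Vs_bound (s : ℝ) : |Vs s| ≤ 25 := by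
  have h1 := (abs_tanh_lt_one s).le
  have h2 := (abs_tanh_lt_one (8*s)).le
  have h3 : cosh s ≤ cosh (8*s) := by
    rw [cosh_le_cosh, abs_mul]; have := abs_nonneg s; norm_num; linarith
  have h4 : ∀ s, |sech s| ≤ 1 := fun s => by
    rw [abs_of_pos (sech_pos s)]; unfold sech
    rw [div_le_one (cosh_pos s)]; exact one_le_cosh s
  have h5 : |cosh s * sech (8*s)| ≤ 1 := by
    have := sech_pos (8*s); have := cosh_pos s
    rw [abs_of_pos (by positivity)]; unfold sech
    rw [mul_one_div, div_le_one (cosh_pos _)]; exact h3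
  have h6 : Vs s = 1/256 * sech s ^ 2 + 24 * (tanh s * tanh (8*s) * (cosh s * sech (8*s)) ^ 2) := by
    unfold Vs; ring
  have h7 : |sech s ^ 2| ≤ 1 := by rw [abs_pow]; exact pow_le_one₀ (abs_nonneg _) (h4 s)
  have h8 : |tanh s * tanh (8*s) * (cosh s * sech (8*s)) ^ 2| ≤ 1 := by
    rw [abs_mul, abs_mul, abs_pow]
    calc _ ≤ (1:ℝ) * 1 * 1 ^ 2 := by gcongr
      _ = 1 := by norm_num
  rw [h6]
  rw [abs_le] at *
  constructor <;> linarith [h7.1, h7.2, h8.1, h8.2]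
end KP

namespace KP
open Real Filter Topology Set

theorem half_line (w : ℝ → ℝ) (hodd : ∀ x : ℝ, w (-x) = -w x) (hd : Differentiable ℝ w)
    (i1 : Integrable (fun x => (w x) ^ 2)) (i2 : Integrable (fun x => (deriv w x) ^ 2))
    (horth : (∫ x : ℝ, w x * Z1 x) = 0)
    (iphi : Integrable (fun x => deriv w x ^ 2 - (101/100 * Vpot x) * w x ^ 2)) :
    0 ≤ ∫ x in Ioi (0:ℝ), (deriv w x ^ 2 - (101/100 * Vpot x) * w x ^ 2) := by
  have ha := aa_pos
  have w0 : w 0 = 0 := by have := hodd 0; simp at this; linarith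
  have dw : ∀ x, HasDerivAt w (deriv w x) x := fun x => (hd x).hasDerivAt
  have lax : Tendsto (fun x => aa * x) atTop atTop := tendsto_id.const_mul_atTop ha
  have dax : ∀ x, HasDerivAt (fun x => aa * x) aa x := fun x => by
    simpa using (hasDerivAt_id x).const_mul aa
  have i3 : Integrable (fun x => 2 * w x * deriv w x) := by
    refine (i1.add i2).mono' ?_ (Eventually.of_forall fun x => ?_)
    · exact ((hd.continuous.measurable.const_mul 2).mul (measurable_deriv w)).aestronglyMeasurable
    · simp only [Pi.add_apply]
      rw [norm_eq_abs, abs_le]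
      constructor <;> nlinarith [sq_nonneg (w x + deriv w x), sq_nonneg (w x - deriv w x)]
  have lw : Tendsto w atTop (𝓝 0) := by
    have : Tendsto (fun x => w x ^ 2) atTop (𝓝 0) := by
      refine tendsto_zero_of_hasDerivAt_of_integrableOn_Ioi (a := 0)
        (f' := fun x => 2 * w x * deriv w x) (fun x _ => ?_) i3.integrableOn i1.integrableOn
      convert! (dw x).pow 2 using 1
      push_cast; ring
    have h := this.sqrt
    simp only [sqrt_sq_eq_abs, sqrt_zero] at h
    exact (tendsto_zero_iff_abs_tendsto_zero _).2 h
  have cZ : Continuous (fun x => Zs (aa * x)) := by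
    have := Zs_diff.continuous
    fun_prop
  have cwZ : Continuous (fun x => w x * Zs (aa * x)) := hd.continuous.mul cZ
  have bZ : ∀ᶠ x in atTop, |Zs (aa * x)| ≤ exp (-7 * (aa * x)) := by
    filter_upwards [eventually_gt_atTop 0] with x hx
    have hp : 0 < aa * x := by positivity
    rw [abs_of_nonneg (Zs_nonneg hp)]; exact Zs_bound hp
  have iwZ : IntegrableOn (fun x => w x * Zs (aa * x)) (Ioi 0) := by
    refine integrable_of_isBigO_exp_neg (b := 7 * aa) (by positivity) cwZ.continuousOn ?_
    refine Asymptotics.IsBigO.of_bound 1 ?_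
    filter_upwards [bZ, (lw.abs).eventually (gt_mem_nhds (show |(0:ℝ)| < 1 by simp))] with x h1 h2
    rw [norm_mul, norm_eq_abs, norm_eq_abs, norm_eq_abs, abs_of_pos (exp_pos _)]
    have : exp (-(7 * aa) * x) = exp (-7 * (aa * x)) := by congr 1; ring
    rw [this]
    gcongr
  have zero : ∫ x in Ioi (0:ℝ), w x * Zs (aa * x) = 0 := by
    have hev : ∀ x, (fun x => w x * Zs (aa * x)) |x| = w x * Zs (aa * x) := by
      intro x
      rcases abs_choice x with h | h <;> simp only [h]
      rw [hodd, mul_neg, Zs_neg]; ring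
    have h2 := integral_comp_abs (f := fun x => w x * Zs (aa * x))
    simp only [hev] at h2
    set C : ℝ := 2 * ((2 : ℝ) ^ (-(3 : ℝ) / 4) * √3) with hC
    have hCp : 0 < C := by positivity
    have h3 : (∫ x : ℝ, w x * Z1 x) = C * ∫ x : ℝ, w x * Zs (aa * x) := by
      rw [← integral_const_mul]
      congr 1; funext x; rw [Z_eq]; ring
    rw [horth] at h3
    rcases mul_eq_zero.1 h3.symm with h | h
    · linarith
    · linarith
  set W : ℝ → ℝ := fun x => -∫ y in (0:ℝ)..x, w y * Zs (aa * y) with hW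
  have dW : ∀ x, HasDerivAt W (-(w x * Zs (aa * x))) x := fun x =>
    (cwZ.integral_hasStrictDerivAt 0 x).hasDerivAt.neg
  have W0 : W 0 = 0 := by simp [hW]
  have lW : Tendsto W atTop (𝓝 0) := by
    have := (intervalIntegral_tendsto_integral_Ioi 0 iwZ tendsto_id).neg
    rw [zero, neg_zero] at this
    exact this
  -- the weight functions
  set h : ℝ → ℝ := fun x => H (aa * x) with hh
  set h1 : ℝ → ℝ := fun x => H1 (aa * x) * aa with hh1
  set h2 : ℝ → ℝ := fun x => H2 (aa * x) * aa * aa with hh2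
  set P : ℝ → ℝ := fun x => 16 * aa * Pf (aa * x) with hP
  set P1 : ℝ → ℝ := fun x => 16 * aa * (Pf1 (aa * x) * aa) with hP1
  have dh : ∀ x, HasDerivAt h (h1 x) x := fun x => (hasDerivAt_H (aa * x)).comp x (dax x)
  have dh1 : ∀ x, HasDerivAt h1 (h2 x) x := fun x =>
    ((hasDerivAt_H1 (aa * x)).comp x (dax x)).mul_const aa
  have dP : ∀ x, 0 < x → HasDerivAt P (P1 x) x := fun x hx =>
    ((hasDerivAt_Pf (show 0 < aa * x by positivity)).comp x (dax x)).const_mul (16 * aa)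
  have hlim : Tendsto (Gf h h1 P w W) (𝓝[>] 0) (𝓝 0) := by
    refine limG0 h h1 P w (deriv w) W (fun x => Zs (aa * x)) _ (16 * aa * (1/40 / aa ^ 3 - 0)) dh
      (dh1 0).continuousAt (by simp [hh, H]) (mul_ne_zero (H1_pos _).ne' ha.ne') dw w0 dW W0
      ((Zs_diff (aa * 0)).hasDerivAt.comp 0 (dax 0)) (by simp [Zs]) ?_
    have lx : Tendsto (fun x : ℝ => x) (𝓝[>] 0) (𝓝 0) :=
      tendsto_id.mono_left nhdsWithin_le_nhds
    have dt : HasDerivAt (fun x => tanh (aa * x)) (sech (aa * 0) ^ 2 * aa) 0 :=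
      (hasDerivAt_tanh' (aa * 0)).comp 0 (dax 0)
    have lt := lim0 dt (by simp)
    have es : sech (aa * 0) ^ 2 * aa = aa := by simp [sech]
    rw [es] at lt
    have lc : Tendsto (fun x => tanh (aa * x) ^ 3 * cosh (aa * x) ^ 2) (𝓝[>] 0) (𝓝 0) := by
      have c : Continuous (fun x => tanh (aa * x) ^ 3 * cosh (aa * x) ^ 2) := by
        have := tanh_diff.continuous
        fun_prop
      have := (c.tendsto 0).mono_left (nhdsWithin_le_nhds (s := Ioi 0))
      simpa using this
    have l1 : Tendsto (fun x => 1/40 / (tanh (aa * x) / x) ^ 3) (𝓝[>] 0) (𝓝 (1/40 / aa ^ 3)) :=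
      tendsto_const_nhds.div (lt.pow 3) (by positivity)
    have l2 := (lc.mul (lx.pow 3)).const_mul 240
    have l3 := (l1.sub l2).const_mul (16 * aa)
    simp only [ne_eq, OfNat.ofNat_ne_zero, not_false_eq_true, zero_pow, mul_zero] at l3
    refine l3.congr' ?_
    filter_upwards [eventually_mem_nhdsWithin] with x hx
    have hx : 0 < x := hx
    have ht := tanh_pos' (show 0 < aa * x by positivity)
    simp only [hP, Pf]
    field_simp
  have main : ∀ R, 0 < R → Gf h h1 P w W R ≤
      ∫ x in (0:ℝ)..R, (deriv w x ^ 2 - (101/100 * Vpot x) * w x ^ 2) := by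
    intro R hR
    refine core h h1 h2 (fun x => Zs (aa * x)) P P1 (fun x => 101/100 * Vpot x) w (deriv w) W
      dh dh1 dP dw dW (fun x hx => H_pos (by positivity)) (fun x hx => Zs_nonneg (by positivity))
      (fun x hx => ?_) (fun x hx => ?_) w0 W0 hlim R hR iphi.integrableOn
    · have := condA (show 0 < aa * x by positivity)
      have e : h2 x = H2 (aa * x) / 128 := by
        simp only [hh2]; linear_combination H2 (aa * x) * aa_sq
      rw [e, V_eq]; exact this
    · have := condB (show 0 < aa * x by positivity)
      refine le_of_eq_of_le ?_ this
      simp only [hP1, hP, hh]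
      linear_combination (16 * Pf1 (aa * x) + 256 * Zs (aa * x) * H (aa * x) * Pf (aa * x) ^ 2)
        * aa_sq
  have bx : ∀ᶠ x in atTop, 1 ≤ aa * x := lax.eventually (eventually_ge_atTop 1)
  have linf := limGinf h P w W (fun x => Zs (aa * x)) aa (19/200) (16 * aa * 241) ha (by norm_num)
    dW lw lW bZ (bx.mono fun x hx => H_lower hx) (bx.mono fun x hx => by
      simp only [hP]
      rw [abs_mul, abs_of_pos (by positivity), mul_assoc (16 * aa)]
      have := Pf_bound hx
      gcongr)
  have lint := intervalIntegral_tendsto_integral_Ioi 0 iphi.integrableOn tendsto_id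
  refine le_of_tendsto_of_tendsto linf lint ?_
  filter_upwards [eventually_gt_atTop 0] with x hx
  refine le_trans ?_ (main x hx)
  have p1 : 0 < h x := H_pos (by positivity)
  have p2 : 0 < h1 x := mul_pos (H1_pos _) ha
  have : 0 ≤ h1 x / h x * w x ^ 2 := by positivity
  unfold Gf
  linarith

theorem final (w : ℝ → ℝ) (hodd : ∀ x : ℝ, w (-x) = -w x) (hd : Differentiable ℝ w)
    (i1 : Integrable (fun x => (w x) ^ 2)) (i2 : Integrable (fun x => (deriv w x) ^ 2))
    (horth : (∫ x : ℝ, w x * Z1 x) = 0) :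
    (∫ x : ℝ, ((deriv w x) ^ 2 - Vpot x * (w x) ^ 2)) ≥ 1/101 * (∫ x : ℝ, (deriv w x) ^ 2) := by
  have iV : Integrable (fun x => Vpot x * w x ^ 2) := by
    refine i1.bdd_mul (c := 25) ?_ (Eventually.of_forall fun x => ?_)
    · have : Continuous Vpot := by
        have e : Vpot = fun x => Vs (aa * x) := funext V_eq
        rw [e]; have := Vs_cont; fun_prop
      exact this.aestronglyMeasurable
    · rw [V_eq]; exact Vs_bound _
  have iphi : Integrable (fun x => deriv w x ^ 2 - (101/100 * Vpot x) * w x ^ 2) := by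
    simp only [mul_assoc]
    exact i2.sub (iV.const_mul _)
  have hl := half_line w hodd hd i1 i2 horth iphi
  have hev : ∀ x, (fun x => deriv w x ^ 2 - (101/100 * Vpot x) * w x ^ 2) |x|
      = deriv w x ^ 2 - (101/100 * Vpot x) * w x ^ 2 := by
    intro x
    have hde : deriv w (-x) = deriv w x := by
      have h1 : (fun x => w (-x)) = fun x => -w x := funext hodd
      have h2 := deriv_comp_neg w x
      rw [h1, deriv.fun_neg] at h2
      linarith
    rcases abs_choice x with h | h <;> simp only [h]
    rw [hde, hodd, V_eq, V_eq, mul_neg, Vs_neg, neg_sq]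
  have h2 := integral_comp_abs (f := fun x => deriv w x ^ 2 - (101/100 * Vpot x) * w x ^ 2)
  simp only [hev] at h2
  have h3 : ∫ x, (deriv w x ^ 2 - (101/100 * Vpot x) * w x ^ 2)
      = (∫ x, deriv w x ^ 2) - 101/100 * ∫ x, Vpot x * w x ^ 2 := by
    simp only [mul_assoc]
    rw [integral_sub i2 (iV.const_mul _), integral_const_mul]
  rw [integral_sub i2 iV]
  linarith
end KP

theorem coercivity_Bsharp :
    ∃ κ > 0, ∀ w : ℝ → ℝ,
      (∀ x : ℝ, w (-x) = -w x) →
      Differentiable ℝ w →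
      Integrable (fun x => (w x) ^ 2) →
      Integrable (fun x => (deriv w x) ^ 2) →
      (∫ x : ℝ, w x * Z1 x) = 0 →
      (∫ x : ℝ, ((deriv w x) ^ 2 - Vpot x * (w x) ^ 2))
        ≥ κ * (∫ x : ℝ, (deriv w x) ^ 2) := by
  exact ⟨1/101, by norm_num, fun w h1 h2 h3 h4 h5 => KP.final w h1 h2 h3 h4 h5⟩
end

section
/- Let V(x) = (1/256)·sech²(x/(8√2)) + 24·tanh(x/(8√2))·cosh²(x/(8√2))·tanh(x/√2)·sech²(x/√2) and Z₁(x) = 2^(-3/4)·√3·tanh(x/√2)·sech(x/√2)·cosh(x/(8√2)). There exist constants C > 0 and κ > 0 such that for every odd differentiable function w : ℝ → ℝ with w and w' square integrable on ℝ, one has ∫_ℝ ( w'(x)² - V(x)·w(x)² ) dx + C·( ∫_ℝ w(x)·Z₁(x) dx )² ≥ κ·∫_ℝ w'(x)² dx. -/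
open MeasureTheory

lemma cert_I1 (x : ℝ) (h0 : 0 ≤ x) (h1 : x ≤ 1/3) :
    0 ≤ ((6/100-314/100*x+191*x^2-838*x^3+987*x^4)-101/12800)*(1+(1-x)^8)^3-4848/100*(1-x)^7*(1-(1-x)^2)*(1-(1-x)^8) := by
  obtain ⟨a, ha⟩ : ∃ a, a = x - 0 := ⟨_, rfl⟩
  obtain ⟨b, hb⟩ : ∃ b, b = 1/3 - x := ⟨_, rfl⟩
  have ha0 : 0 ≤ a := by rw [ha]; linarith
  have hb0 : 0 ≤ b := by rw [hb]; linarith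
  have key : ((6/100-314/100*x+191*x^2-838*x^3+987*x^4)-101/12800)*(1+(1-x)^8)^3-4848/100*(1-x)^7*(1-(1-x)^2)*(1-(1-x)^8) =
      15258820567458987/1600 * b^28
      + 7465459937802273/200 * a^1 * b^27
      + 35364979269541377/200 * a^2 * b^26
      + 1332972233436525903/200 * a^3 * b^25
      + 2492265270702670299/32 * a^4 * b^24
      + 194113780224253940871/400 * a^5 * b^23
      + 1590730448211050859837/800 * a^6 * b^22
      + 2349801670673889697941/400 * a^7 * b^21
      + 41978592213470128505313/3200 * a^8 * b^20
      + 3631633196998369971249/160 * a^9 * b^19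
      + 9846652955708490359247/320 * a^10 * b^18
      + 26228600900458805497293/800 * a^11 * b^17
      + 88428987344294596814607/3200 * a^12 * b^16
      + 1557469305813583452951/80 * a^13 * b^15
      + 457568962408419249933/32 * a^14 * b^14
      + 1161002766477462302043/80 * a^15 * b^13
      + 110471578112387852048331/6400 * a^16 * b^12
      + 14461267340816160581817/800 * a^17 * b^11
      + 2425443057548426092221/160 * a^18 * b^10
      + 1608384822451909410141/160 * a^19 * b^9
      + 16889802621944419966257/3200 * a^20 * b^8
      + 3504121932918666987621/1600 * a^21 * b^7
      + 2277727559362559023407/3200 * a^22 * b^6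
      + 284861876011239371031/1600 * a^23 * b^5
      + 17055343583712470385/512 * a^24 * b^4
      + 14292422228931990417/3200 * a^25 * b^3
      + 2580557644937518911/6400 * a^26 * b^2
      + 71779529629469037/3200 * a^27 * b^1
      + 8312156909311659/12800 * a^28 := by
    rw [ha, hb]; ring
  rw [key]
  positivity

lemma cert_I2 (x : ℝ) (h0 : 0 ≤ x) (h1 : x ≤ 1/3) :
    0 ≤ ((1-x)^3*(1+(1-x))^2*(1+(1-x)^2)*(1+(1-x)^4))-((3991/1000+536/100*x-80*x^2+1195/10*x^3)-2/100)*(1+(1-x)^8)^2 := by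
  obtain ⟨a, ha⟩ : ∃ a, a = x - 0 := ⟨_, rfl⟩
  obtain ⟨b, hb⟩ : ∃ b, b = 1/3 - x := ⟨_, rfl⟩
  have ha0 : 0 ≤ a := by rw [ha]; linarith
  have hb0 : 0 ≤ b := by rw [hb]; linarith
  have key : ((1-x)^3*(1+(1-x))^2*(1+(1-x)^2)*(1+(1-x)^4))-((3991/1000+536/100*x-80*x^2+1195/10*x^3)-2/100)*(1+(1-x)^8)^2 =
      33705582543/250 * b^19
      + 23632649829/250 * a^1 * b^18
      + 234905956497/250 * a^2 * b^17
      + 10042240401927/250 * a^3 * b^16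
      + 35547537385683/125 * a^4 * b^15
      + 129163518237627/125 * a^5 * b^14
      + 297959356932777/125 * a^6 * b^13
      + 472640493367593/125 * a^7 * b^12
      + 531291963748842/125 * a^8 * b^11
      + 423699523862409/125 * a^9 * b^10
      + 235834714165374/125 * a^10 * b^9
      + 94354600569732/125 * a^11 * b^8
      + 81989653532931/250 * a^12 * b^7
      + 66395219635089/250 * a^13 * b^6
      + 53620400203749/250 * a^14 * b^5
      + 29137304525031/250 * a^15 * b^4
      + 40090022848863/1000 * a^16 * b^3
      + 8264196277893/1000 * a^17 * b^2
      + 879792089661/1000 * a^18 * b^1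
      + 30180359027/1000 * a^19 := by
    rw [ha, hb]; ring
  rw [key]
  positivity

lemma cert_I3 (x : ℝ) (h0 : 0 ≤ x) (h1 : x ≤ 1/3) :
    0 ≤ ((3991/1000+536/100*x-80*x^2+1195/10*x^3)+2/100)*(1+(1-x)^8)^2-((1-x)^3*(1+(1-x))^2*(1+(1-x)^2)*(1+(1-x)^4)) := by
  obtain ⟨a, ha⟩ : ∃ a, a = x - 0 := ⟨_, rfl⟩
  obtain ⟨b, hb⟩ : ∃ b, b = 1/3 - x := ⟨_, rfl⟩
  have ha0 : 0 ≤ a := by rw [ha]; linarith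
  have hb0 : 0 ≤ b := by rw [hb]; linarith
  have key : ((3991/1000+536/100*x-80*x^2+1195/10*x^3)+2/100)*(1+(1-x)^8)^2-((1-x)^3*(1+(1-x))^2*(1+(1-x)^2)*(1+(1-x)^4)) =
      12784876137/250 * b^19
      + 735711508611/250 * a^1 * b^18
      + 5710707148023/250 * a^2 * b^17
      + 19613506629393/250 * a^3 * b^16
      + 17251274767797/125 * a^4 * b^15
      + 13374123568893/125 * a^5 * b^14
      + 4427022041343/125 * a^6 * b^13
      + 42931402023087/125 * a^7 * b^12
      + 185228600966478/125 * a^8 * b^11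
      + 394623718199631/125 * a^9 * b^10
      + 534881952574866/125 * a^10 * b^9
      + 503867146369788/125 * a^11 * b^8
      + 679723966929429/250 * a^12 * b^7
      + 327645080098551/250 * a^13 * b^6
      + 109496866754691/250 * a^14 * b^5
      + 23635006832529/250 * a^15 * b^4
      + 11348447192217/1000 * a^16 * b^3
      + 617083509987/1000 * a^17 * b^2
      + 88880977899/1000 * a^18 * b^1
      + 20008849093/1000 * a^19 := by
    rw [ha, hb]; ring
  rw [key]
  positivity

lemma cert_Lin_0 (x : ℝ) (h0 : 0 ≤ x) (h1 : x ≤ 1/6) :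
    0 ≤ (1/8*(1-x)+77/160*(1-x)*(6-9*x)-(6/100-314/100*x+191*x^2-838*x^3+987*x^4)*(1+1/2*x-77/10*x^2))-1/100 := by
  obtain ⟨a, ha⟩ : ∃ a, a = x - 0 := ⟨_, rfl⟩
  obtain ⟨b, hb⟩ : ∃ b, b = 1/6 - x := ⟨_, rfl⟩
  have ha0 : 0 ≤ a := by rw [ha]; linarith
  have hb0 : 0 ≤ b := by rw [hb]; linarith
  have key : (1/8*(1-x)+77/160*(1-x)*(6-9*x)-(6/100-314/100*x+191*x^2-838*x^3+987*x^4)*(1+1/2*x-77/10*x^2))-1/100 =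
      3432132/25 * b^6
      + 19769751/25 * a^1 * b^5
      + 413845443/250 * a^2 * b^4
      + 40362246/25 * a^3 * b^3
      + 99037161/125 * a^4 * b^2
      + 23842128/125 * a^5 * b^1
      + 2331558/125 * a^6 := by
    rw [ha, hb]; ring
  rw [key]
  positivity

lemma cert_Lin_1 (x : ℝ) (h0 : 1/6 ≤ x) (h1 : x ≤ 1/3) :
    0 ≤ (1/8*(1-x)+77/160*(1-x)*(6-9*x)-(6/100-314/100*x+191*x^2-838*x^3+987*x^4)*(1+1/2*x-77/10*x^2))-1/100 := by
  obtain ⟨a, ha⟩ : ∃ a, a = x - 1/6 := ⟨_, rfl⟩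
  obtain ⟨b, hb⟩ : ∃ b, b = 1/3 - x := ⟨_, rfl⟩
  have ha0 : 0 ≤ a := by rw [ha]; linarith
  have hb0 : 0 ≤ b := by rw [hb]; linarith
  have key : (1/8*(1-x)+77/160*(1-x)*(6-9*x)-(6/100-314/100*x+191*x^2-838*x^3+987*x^4)*(1+1/2*x-77/10*x^2))-1/100 =
      2331558/125 * b^6
      + 4136568/125 * a^1 * b^5
      + 509361/125 * a^2 * b^4
      + 9850218/125 * a^3 * b^3
      + 50301771/250 * a^4 * b^2
      + 16585419/125 * a^5 * b^1
      + 3530388/125 * a^6 := by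
    rw [ha, hb]; ring
  rw [key]
  positivity

lemma cert_Lin (x : ℝ) (h0 : 0 ≤ x) (h1 : x ≤ 1/3) :
    0 ≤ (1/8*(1-x)+77/160*(1-x)*(6-9*x)-(6/100-314/100*x+191*x^2-838*x^3+987*x^4)*(1+1/2*x-77/10*x^2))-1/100 := by
  rcases le_total x (1/6) with h2 | h2
  · exact cert_Lin_0 x h0 h2
  exact cert_Lin_1 x h2 h1

lemma cert_I4_0 (x : ℝ) (h0 : 0 ≤ x) (h1 : x ≤ 1/6) :
    0 ≤ (1/8*(1-x)+77/160*(1-x)*(6-9*x)-(6/100-314/100*x+191*x^2-838*x^3+987*x^4)*(1+1/2*x-77/10*x^2))*(32/10*(-1/4*x*(1+1/2*x-77/10*x^2)+(1-x)*(1+1/2*x-77/10*x^2)-1/4*(1-x)*(1+x-231/10*x^2))-x^2*(66/10-11*x)^2)-(1+1/2*x-77/10*x^2)*(3/2*(1/8*x*(66/10-11*x)-1/4*(1-x)*(198/10-44*x)+(3991/1000+536/100*x-80*x^2+1195/10*x^3)*(1+1/2*x-77/10*x^2))^2+3*(2/100)^2*(1+1/2*x-77/10*x^2)^2) := by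
  obtain ⟨a, ha⟩ : ∃ a, a = x - 0 := ⟨_, rfl⟩
  obtain ⟨b, hb⟩ : ∃ b, b = 1/6 - x := ⟨_, rfl⟩
  have ha0 : 0 ≤ a := by rw [ha]; linarith
  have hb0 : 0 ≤ b := by rw [hb]; linarith
  have key : (1/8*(1-x)+77/160*(1-x)*(6-9*x)-(6/100-314/100*x+191*x^2-838*x^3+987*x^4)*(1+1/2*x-77/10*x^2))*(32/10*(-1/4*x*(1+1/2*x-77/10*x^2)+(1-x)*(1+1/2*x-77/10*x^2)-1/4*(1-x)*(1+x-231/10*x^2))-x^2*(66/10-11*x)^2)-(1+1/2*x-77/10*x^2)*(3/2*(1/8*x*(66/10-11*x)-1/4*(1-x)*(198/10-44*x)+(3991/1000+536/100*x-80*x^2+1195/10*x^3)*(1+1/2*x-77/10*x^2))^2+3*(2/100)^2*(1+1/2*x-77/10*x^2)^2) =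
      194049210324384/15625 * b^12
      + 2620443113020584/15625 * a^1 * b^11
      + 71784264976579458/78125 * a^2 * b^10
      + 437932485081876591/156250 * a^3 * b^9
      + 8440092093021221853/1562500 * a^4 * b^8
      + 21906868068221694381/3125000 * a^5 * b^7
      + 197960414162181677541/31250000 * a^6 * b^6
      + 7897912568116693101/1953125 * a^7 * b^5
      + 11382677892993176433/6250000 * a^8 * b^4
      + 3551048159636516031/6250000 * a^9 * b^3
      + 146835250972574517/1250000 * a^10 * b^2
      + 912509536387730067/62500000 * a^11 * b^1
      + 104540019347700069/125000000 * a^12 := by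
    rw [ha, hb]; ring
  rw [key]
  positivity

lemma cert_I4_1 (x : ℝ) (h0 : 1/6 ≤ x) (h1 : x ≤ 1/3) :
    0 ≤ (1/8*(1-x)+77/160*(1-x)*(6-9*x)-(6/100-314/100*x+191*x^2-838*x^3+987*x^4)*(1+1/2*x-77/10*x^2))*(32/10*(-1/4*x*(1+1/2*x-77/10*x^2)+(1-x)*(1+1/2*x-77/10*x^2)-1/4*(1-x)*(1+x-231/10*x^2))-x^2*(66/10-11*x)^2)-(1+1/2*x-77/10*x^2)*(3/2*(1/8*x*(66/10-11*x)-1/4*(1-x)*(198/10-44*x)+(3991/1000+536/100*x-80*x^2+1195/10*x^3)*(1+1/2*x-77/10*x^2))^2+3*(2/100)^2*(1+1/2*x-77/10*x^2)^2) := by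
  obtain ⟨a, ha⟩ : ∃ a, a = x - 1/6 := ⟨_, rfl⟩
  obtain ⟨b, hb⟩ : ∃ b, b = 1/3 - x := ⟨_, rfl⟩
  have ha0 : 0 ≤ a := by rw [ha]; linarith
  have hb0 : 0 ≤ b := by rw [hb]; linarith
  have key : (1/8*(1-x)+77/160*(1-x)*(6-9*x)-(6/100-314/100*x+191*x^2-838*x^3+987*x^4)*(1+1/2*x-77/10*x^2))*(32/10*(-1/4*x*(1+1/2*x-77/10*x^2)+(1-x)*(1+1/2*x-77/10*x^2)-1/4*(1-x)*(1+x-231/10*x^2))-x^2*(66/10-11*x)^2)-(1+1/2*x-77/10*x^2)*(3/2*(1/8*x*(66/10-11*x)-1/4*(1-x)*(198/10-44*x)+(3991/1000+536/100*x-80*x^2+1195/10*x^3)*(1+1/2*x-77/10*x^2))^2+3*(2/100)^2*(1+1/2*x-77/10*x^2)^2) =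
      104540019347700069/125000000 * b^12
      + 341970695784670761/62500000 * a^1 * b^11
      + 266458825498768371/15625000 * a^2 * b^10
      + 256788839688480267/6250000 * a^3 * b^9
      + 112425150672362331/1250000 * a^4 * b^8
      + 304960329781509438/1953125 * a^5 * b^7
      + 6016037356083954069/31250000 * a^6 * b^6
      + 2601344673346570893/15625000 * a^7 * b^5
      + 161380665365614083/1562500 * a^8 * b^4
      + 36299154553500747/781250 * a^9 * b^3
      + 28652397038915652/1953125 * a^10 * b^2
      + 5687307071555616/1953125 * a^11 * b^1
      + 530151455088384/1953125 * a^12 := by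
    rw [ha, hb]; ring
  rw [key]
  positivity

lemma cert_I4 (x : ℝ) (h0 : 0 ≤ x) (h1 : x ≤ 1/3) :
    0 ≤ (1/8*(1-x)+77/160*(1-x)*(6-9*x)-(6/100-314/100*x+191*x^2-838*x^3+987*x^4)*(1+1/2*x-77/10*x^2))*(32/10*(-1/4*x*(1+1/2*x-77/10*x^2)+(1-x)*(1+1/2*x-77/10*x^2)-1/4*(1-x)*(1+x-231/10*x^2))-x^2*(66/10-11*x)^2)-(1+1/2*x-77/10*x^2)*(3/2*(1/8*x*(66/10-11*x)-1/4*(1-x)*(198/10-44*x)+(3991/1000+536/100*x-80*x^2+1195/10*x^3)*(1+1/2*x-77/10*x^2))^2+3*(2/100)^2*(1+1/2*x-77/10*x^2)^2) := by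
  rcases le_total x (1/6) with h2 | h2
  · exact cert_I4_0 x h0 h2
  exact cert_I4_1 x h2 h1

lemma cert_Lout_0 (s : ℝ) (h0 : 0 ≤ s) (h1 : s ≤ 1/3) :
    0 ≤ (65/1600+108/10*s^5-(101/100*(1/32*(1-96/100*s)+48*(s^6-s^8)))*(1-65/100*s-48/10*s^6))-1/1000 := by
  obtain ⟨a, ha⟩ : ∃ a, a = s - 0 := ⟨_, rfl⟩
  obtain ⟨b, hb⟩ : ∃ b, b = 1/3 - s := ⟨_, rfl⟩
  have ha0 : 0 ≤ a := by rw [ha]; linarith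
  have hb0 : 0 ≤ b := by rw [hb]; linarith
  have key : (65/1600+108/10*s^5-(101/100*(1/32*(1-96/100*s)+48*(s^6-s^8)))*(1-65/100*s-48/10*s^6))-1/1000 =
      617003001/16000 * b^14
      + 198686126583/320000 * a^1 * b^13
      + 7283124150003/1600000 * a^2 * b^12
      + 16184404834533/800000 * a^3 * b^11
      + 48864936536559/800000 * a^4 * b^10
      + 42572546487837/320000 * a^5 * b^9
      + 69275866981293/320000 * a^6 * b^8
      + 107306609488407/400000 * a^7 * b^7
      + 50930091536337/200000 * a^8 * b^6
      + 294166462635333/1600000 * a^9 * b^5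
      + 31625158879521/320000 * a^10 * b^4
      + 6085733314617/160000 * a^11 * b^3
      + 1569332510559/160000 * a^12 * b^2
      + 480690139851/320000 * a^13 * b^1
      + 6576025023/64000 * a^14 := by
    rw [ha, hb]; ring
  rw [key]
  positivity

lemma cert_Lout_1 (s : ℝ) (h0 : 1/3 ≤ s) (h1 : s ≤ 2/3) :
    0 ≤ (65/1600+108/10*s^5-(101/100*(1/32*(1-96/100*s)+48*(s^6-s^8)))*(1-65/100*s-48/10*s^6))-1/1000 := by
  obtain ⟨a, ha⟩ : ∃ a, a = s - 1/3 := ⟨_, rfl⟩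
  obtain ⟨b, hb⟩ : ∃ b, b = 2/3 - s := ⟨_, rfl⟩
  have ha0 : 0 ≤ a := by rw [ha]; linarith
  have hb0 : 0 ≤ b := by rw [hb]; linarith
  have key : (65/1600+108/10*s^5-(101/100*(1/32*(1-96/100*s)+48*(s^6-s^8)))*(1-65/100*s-48/10*s^6))-1/1000 =
      6576025023/64000 * b^14
      + 439953363369/320000 * a^1 * b^13
      + 652271731713/80000 * a^2 * b^12
      + 4464047289483/160000 * a^3 * b^11
      + 19249502474277/320000 * a^4 * b^10
      + 136673996357367/1600000 * a^5 * b^9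
      + 73656956072241/800000 * a^6 * b^8
      + 49874340704949/400000 * a^7 * b^7
      + 391838648394969/1600000 * a^8 * b^6
      + 650711396803563/1600000 * a^9 * b^5
      + 46083729502737/100000 * a^10 * b^4
      + 275102827203951/800000 * a^11 * b^3
      + 260712211771431/1600000 * a^12 * b^2
      + 71279410098609/1600000 * a^13 * b^1
      + 4272947943309/800000 * a^14 := by
    rw [ha, hb]; ring
  rw [key]
  positivity

lemma cert_Lout (s : ℝ) (h0 : 0 ≤ s) (h1 : s ≤ 2/3) :
    0 ≤ (65/1600+108/10*s^5-(101/100*(1/32*(1-96/100*s)+48*(s^6-s^8)))*(1-65/100*s-48/10*s^6))-1/1000 := by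
  rcases le_total s (1/3) with h2 | h2
  · exact cert_Lout_0 s h0 h2
  exact cert_Lout_1 s h2 h1

lemma cert_O4_0 (s : ℝ) (h0 : 0 ≤ s) (h1 : s ≤ 1/3) :
    0 ≤ (65/1600+108/10*s^5-(101/100*(1/32*(1-96/100*s)+48*(s^6-s^8)))*(1-65/100*s-48/10*s^6))*(8/10*(3/2*(1-65/100*s-48/10*s^6)+65/400*s+72/10*s^6)-s*(11/10-s^5)^2)-(1-65/100*s-48/10*s^6)*(3/2*(-77/80+17/8*s^5+(1+s)*(1-65/100*s-48/10*s^6))^2+30*s^16) := by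
  obtain ⟨a, ha⟩ : ∃ a, a = s - 0 := ⟨_, rfl⟩
  obtain ⟨b, hb⟩ : ∃ b, b = 1/3 - s := ⟨_, rfl⟩
  have ha0 : 0 ≤ a := by rw [ha]; linarith
  have hb0 : 0 ≤ b := by rw [hb]; linarith
  have key : (65/1600+108/10*s^5-(101/100*(1/32*(1-96/100*s)+48*(s^6-s^8)))*(1-65/100*s-48/10*s^6))*(8/10*(3/2*(1-65/100*s-48/10*s^6)+65/400*s+72/10*s^6)-s*(11/10-s^5)^2)-(1-65/100*s-48/10*s^6)*(3/2*(-77/80+17/8*s^5+(1+s)*(1-65/100*s-48/10*s^6))^2+30*s^16) =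
      475328909897523/64000 * b^25
      + 1199381932962866979/6400000 * a^1 * b^24
      + 36007196074975059381/16000000 * a^2 * b^23
      + 1371516387091058637909/80000000 * a^3 * b^22
      + 7451580419523225478233/80000000 * a^4 * b^21
      + 15385081969464501443247/40000000 * a^5 * b^20
      + 20097260793811809018297/16000000 * a^6 * b^19
      + 53323268016164735399499/16000000 * a^7 * b^18
      + 585890766852599156709627/80000000 * a^8 * b^17
      + 2162877756895855519299063/160000000 * a^9 * b^16
      + 846988147157773742844741/40000000 * a^10 * b^15
      + 28352415000758299912287/1000000 * a^11 * b^14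
      + 65201215422830168089089/2000000 * a^12 * b^13
      + 645167583147028068812493/20000000 * a^13 * b^12
      + 1098411281977186311918327/40000000 * a^14 * b^11
      + 200546816259902718717729/10000000 * a^15 * b^10
      + 99992678806333763422119/8000000 * a^16 * b^9
      + 211038154329579987476277/32000000 * a^17 * b^8
      + 233059770218562208754949/80000000 * a^18 * b^7
      + 84908917041652781686683/80000000 * a^19 * b^6
      + 25002268203531134073519/80000000 * a^20 * b^5
      + 578642671362752966079/8000000 * a^21 * b^4
      + 202137031509303148857/16000000 * a^22 * b^3
      + 24991178154936346989/16000000 * a^23 * b^2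
      + 1945937191909225653/16000000 * a^24 * b^1
      + 28685427171924429/6400000 * a^25 := by
    rw [ha, hb]; ring
  rw [key]
  positivity

lemma cert_O4_1 (s : ℝ) (h0 : 1/3 ≤ s) (h1 : s ≤ 1/2) :
    0 ≤ (65/1600+108/10*s^5-(101/100*(1/32*(1-96/100*s)+48*(s^6-s^8)))*(1-65/100*s-48/10*s^6))*(8/10*(3/2*(1-65/100*s-48/10*s^6)+65/400*s+72/10*s^6)-s*(11/10-s^5)^2)-(1-65/100*s-48/10*s^6)*(3/2*(-77/80+17/8*s^5+(1+s)*(1-65/100*s-48/10*s^6))^2+30*s^16) := by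
  obtain ⟨a, ha⟩ : ∃ a, a = s - 1/3 := ⟨_, rfl⟩
  obtain ⟨b, hb⟩ : ∃ b, b = 1/2 - s := ⟨_, rfl⟩
  have ha0 : 0 ≤ a := by rw [ha]; linarith
  have hb0 : 0 ≤ b := by rw [hb]; linarith
  have key : (65/1600+108/10*s^5-(101/100*(1/32*(1-96/100*s)+48*(s^6-s^8)))*(1-65/100*s-48/10*s^6))*(8/10*(3/2*(1-65/100*s-48/10*s^6)+65/400*s+72/10*s^6)-s*(11/10-s^5)^2)-(1-65/100*s-48/10*s^6)*(3/2*(-77/80+17/8*s^5+(1+s)*(1-65/100*s-48/10*s^6))^2+30*s^16) =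
      469982038784809844736/3125 * b^25
      + 56239397319911092789248/15625 * a^1 * b^24
      + 643156654063304668962816/15625 * a^2 * b^23
      + 4677463428792548858191872/15625 * a^3 * b^22
      + 4858218757213025138085888/3125 * a^4 * b^21
      + 479505697573213511819864064/78125 * a^5 * b^20
      + 1496321304257380955495417856/78125 * a^6 * b^19
      + 3789479721324635232539576832/78125 * a^7 * b^18
      + 7938522348455793089579263488/78125 * a^8 * b^17
      + 13957754084502381662507754624/78125 * a^9 * b^16
      + 20838651645242529609126856128/78125 * a^10 * b^15
      + 26678448358744469766520631328/78125 * a^11 * b^14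
      + 29537852549323133444950118736/78125 * a^12 * b^13
      + 28488633277876445249632496304/78125 * a^13 * b^12
      + 24067499517797739130535716512/78125 * a^14 * b^11
      + 3571851718585077275195880192/15625 * a^15 * b^10
      + 11626523108099717074167105648/78125 * a^16 * b^9
      + 6599158326479274119816448096/78125 * a^17 * b^8
      + 3227480121487352046755045184/78125 * a^18 * b^7
      + 1336550433976620673148485152/78125 * a^19 * b^6
      + 457746212082448165935224592/78125 * a^20 * b^5
      + 125661773978167680359505936/78125 * a^21 * b^4
      + 26477010128007436823438112/78125 * a^22 * b^3
      + 4006964032791267309211008/78125 * a^23 * b^2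
      + 386782171264558908134064/78125 * a^24 * b^1
      + 17855253029444949300096/78125 * a^25 := by
    rw [ha, hb]; ring
  rw [key]
  positivity

lemma cert_O4_2 (s : ℝ) (h0 : 1/2 ≤ s) (h1 : s ≤ 2/3) :
    0 ≤ (65/1600+108/10*s^5-(101/100*(1/32*(1-96/100*s)+48*(s^6-s^8)))*(1-65/100*s-48/10*s^6))*(8/10*(3/2*(1-65/100*s-48/10*s^6)+65/400*s+72/10*s^6)-s*(11/10-s^5)^2)-(1-65/100*s-48/10*s^6)*(3/2*(-77/80+17/8*s^5+(1+s)*(1-65/100*s-48/10*s^6))^2+30*s^16) := by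
  obtain ⟨a, ha⟩ : ∃ a, a = s - 1/2 := ⟨_, rfl⟩
  obtain ⟨b, hb⟩ : ∃ b, b = 2/3 - s := ⟨_, rfl⟩
  have ha0 : 0 ≤ a := by rw [ha]; linarith
  have hb0 : 0 ≤ b := by rw [hb]; linarith
  have key : (65/1600+108/10*s^5-(101/100*(1/32*(1-96/100*s)+48*(s^6-s^8)))*(1-65/100*s-48/10*s^6))*(8/10*(3/2*(1-65/100*s-48/10*s^6)+65/400*s+72/10*s^6)-s*(11/10-s^5)^2)-(1-65/100*s-48/10*s^6)*(3/2*(-77/80+17/8*s^5+(1+s)*(1-65/100*s-48/10*s^6))^2+30*s^16) =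
      17855253029444949300096/78125 * b^25
      + 505980480207688556870736/78125 * a^1 * b^24
      + 6867723447426378878891136/78125 * a^2 * b^23
      + 474979792368839135536224/625 * a^3 * b^22
      + 366847225574522874882435216/78125 * a^4 * b^21
      + 1723586714134275697938960912/78125 * a^5 * b^20
      + 1279562076074706197284492704/15625 * a^6 * b^19
      + 3849245897645615988434026752/15625 * a^7 * b^18
      + 1910540733491959173870750432/3125 * a^8 * b^17
      + 19807494070405803888265271568/15625 * a^9 * b^16
      + 173147054994229762197923652864/78125 * a^10 * b^15
      + 256882722338476454963301343584/78125 * a^11 * b^14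
      + 324804869143509612620008156464/78125 * a^12 * b^13
      + 14035213265471708004841953168/3125 * a^13 * b^12
      + 324131622893526354190238993184/78125 * a^14 * b^11
      + 10234457105861860151007111552/3125 * a^15 * b^10
      + 172181137414127994783408125952/78125 * a^16 * b^9
      + 98357782485214782851239406592/78125 * a^17 * b^8
      + 1895068979106339767948158464/3125 * a^18 * b^7
      + 19049839486502437567660557312/78125 * a^19 * b^6
      + 6299011919721259947616690176/78125 * a^20 * b^5
      + 1674178388250601383711793152/78125 * a^21 * b^4
      + 345022687979740149528010752/78125 * a^22 * b^3
      + 2075717812157475009896448/3125 * a^23 * b^2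
      + 5077693756045722887626752/78125 * a^24 * b^1
      + 242810451647642913767424/78125 * a^25 := by
    rw [ha, hb]; ring
  rw [key]
  positivity

lemma cert_O4 (s : ℝ) (h0 : 0 ≤ s) (h1 : s ≤ 2/3) :
    0 ≤ (65/1600+108/10*s^5-(101/100*(1/32*(1-96/100*s)+48*(s^6-s^8)))*(1-65/100*s-48/10*s^6))*(8/10*(3/2*(1-65/100*s-48/10*s^6)+65/400*s+72/10*s^6)-s*(11/10-s^5)^2)-(1-65/100*s-48/10*s^6)*(3/2*(-77/80+17/8*s^5+(1+s)*(1-65/100*s-48/10*s^6))^2+30*s^16) := by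
  rcases le_total s (1/3) with h2 | h2
  · exact cert_O4_0 s h0 h2
  rcases le_total s (1/2) with h3 | h3
  · exact cert_O4_1 s h2 h3
  exact cert_O4_2 s h3 h1

/-- The rescaled potential in the variable `s = exp (-y/4)`. -/
noncomputable def PS (s : ℝ) : ℝ :=
  s / (32 * (1 + s) ^ 2) + 48 * s ^ 7 * (1 - s ^ 2) * (1 - s ^ 8) / (1 + s ^ 8) ^ 3

/-- The rescaled mode in the variables `s = exp (-y/4)`, `z = exp (-y/8)`. -/
noncomputable def ZS (s z : ℝ) : ℝ :=
  z * (s ^ 3 * (1 + s) * (1 - s ^ 8) / (1 + s ^ 8) ^ 2)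

/-- Pointwise Riccati-type inequality. -/
lemma core_ineq (u u1 u2 G G1 K K1 w w1 L Q Z Λ : ℝ) (hu : 0 < u) (hΛ : 0 < Λ)
    (hL : Λ ≤ -u2 - Q * u)
    (hM : (G1 + Z * u) ^ 2 * u ≤ Λ * (K1 * u - K * u1 - G ^ 2)) :
    0 ≤ w1 ^ 2 - Q * w ^ 2 + 2 * L * (Z * w) +
      ((-u2 * w ^ 2 - u1 * (2 * w * w1) + 2 * L * (G1 * w + G * w1) + L ^ 2 * K1) * u
        - (-u1 * w ^ 2 + 2 * L * (G * w) + L ^ 2 * K) * u1) / u ^ 2 := by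
  have key : w1 ^ 2 - Q * w ^ 2 + 2 * L * (Z * w) +
      ((-u2 * w ^ 2 - u1 * (2 * w * w1) + 2 * L * (G1 * w + G * w1) + L ^ 2 * K1) * u
        - (-u1 * w ^ 2 + 2 * L * (G * w) + L ^ 2 * K) * u1) / u ^ 2
      = (w1 + (-u1 * w + L * G) / u) ^ 2 + (1 / (u ^ 2 * Λ)) *
        ((-u2 - Q * u - Λ) * Λ * u * w ^ 2 + u * (Λ * w + L * (G1 + Z * u)) ^ 2
          + L ^ 2 * (Λ * (K1 * u - K * u1 - G ^ 2) - (G1 + Z * u) ^ 2 * u)) := by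
    field_simp
    ring
  rw [key]
  have h1 : 0 ≤ -u2 - Q * u - Λ := by linarith
  have h2 : 0 ≤ Λ * (K1 * u - K * u1 - G ^ 2) - (G1 + Z * u) ^ 2 * u := by linarith
  positivity

lemma sq_sub_aux (g e c : ℝ) (h : 3 * e ^ 2 ≤ c) : (g - e) ^ 2 ≤ 3/2 * g ^ 2 + c := by
  nlinarith [sq_nonneg (g + 2 * e)]

lemma outer_cond (s z : ℝ) (h0 : 0 < s) (h1 : s ≤ 2 / 3) (hz : z ^ 2 = s) :
    0 < 1 - 65/100*s - 48/10*s^6 ∧ ∃ Λ, 0 < Λ ∧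
      Λ ≤ -(-(65/1600*s + 108/10*s^6)) - 101/100 * PS s * (1 - 65/100*s - 48/10*s^6) ∧
      ((z * (-77/80*s^3 + 17/8*s^8)) + ZS s z * (1 - 65/100*s - 48/10*s^6)) ^ 2
        * (1 - 65/100*s - 48/10*s^6) ≤
      Λ * (12/10*s^6 * (1 - 65/100*s - 48/10*s^6) - (-8/10*s^6) * (65/400*s + 72/10*s^6)
        - (z * (11/10*s^3 - s^8)) ^ 2) := by
  have hs6 : s ^ 6 ≤ (2/3 : ℝ) ^ 6 := by gcongr
  have hu : 0 < 1 - 65/100*s - 48/10*s^6 := by norm_num at hs6; linarith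
  have hL := cert_Lout s h0.le h1
  have hO := cert_O4 s h0.le h1
  refine ⟨hu, s * (65/1600+108/10*s^5-(101/100*(1/32*(1-96/100*s)+48*(s^6-s^8)))*(1-65/100*s-48/10*s^6)),
    ?_, ?_, ?_⟩
  · apply mul_pos h0; linarith
  · have hP : 101/100 * PS s ≤ s * (101/100*(1/32*(1-96/100*s)+48*(s^6-s^8))) := by
      have a1 : s / (32 * (1 + s) ^ 2) ≤ s * (1/32*(1-96/100*s)) := by
        rw [div_le_iff₀ (by positivity)]
        have : 0 ≤ s * (s * (1.04 - 0.92 * s - 0.96 * s ^ 2)) := by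
          have : 0 ≤ 1.04 - 0.92 * s - 0.96 * s ^ 2 := by nlinarith
          positivity
        nlinarith
      have a2 : 48 * s ^ 7 * (1 - s ^ 2) * (1 - s ^ 8) / (1 + s ^ 8) ^ 3 ≤ s * (48*(s^6-s^8)) := by
        have e1 : 0 ≤ 1 - s ^ 2 := by nlinarith
        have e2 : (1 - s ^ 8) / (1 + s ^ 8) ^ 3 ≤ 1 := by
          rw [div_le_one (by positivity)]
          have : 0 ≤ s ^ 8 := by positivity
          nlinarith [sq_nonneg (s ^ 8), pow_nonneg this 3]
        have e3 : 0 ≤ 48 * s ^ 7 * (1 - s ^ 2) := by positivity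
        calc 48 * s ^ 7 * (1 - s ^ 2) * (1 - s ^ 8) / (1 + s ^ 8) ^ 3
            = (48 * s ^ 7 * (1 - s ^ 2)) * ((1 - s ^ 8) / (1 + s ^ 8) ^ 3) := by ring
          _ ≤ (48 * s ^ 7 * (1 - s ^ 2)) * 1 := by gcongr
          _ = _ := by ring
      unfold PS; linarith
    have := mul_le_mul_of_nonneg_right hP hu.le
    linarith
  · obtain ⟨φ, hφ⟩ : ∃ φ, φ = (1 - s ^ 8) / (1 + s ^ 8) ^ 2 := ⟨_, rfl⟩
    have hZ : ZS s z = z * (s ^ 3 * (1 + s) * φ) := by rw [ZS, hφ]; ring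
    have ht : 0 ≤ s ^ 8 := by positivity
    have f1 : φ ≤ 1 := by
      rw [hφ, div_le_one (by positivity)]; nlinarith
    have f2 : 1 - 3 * s ^ 8 ≤ φ := by
      rw [hφ, le_div_iff₀ (by positivity)]
      nlinarith [sq_nonneg (s ^ 8), pow_nonneg ht 3]
    obtain ⟨u, hu'⟩ : ∃ u, u = 1 - 65/100*s - 48/10*s^6 := ⟨_, rfl⟩
    have hs6' : 0 ≤ s ^ 6 := by positivity
    have g1 : (1 + s) * u ≤ 105 / 100 := by
      rw [hu']; nlinarith [sq_nonneg (s - 35/130), mul_nonneg h0.le hs6']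
    rw [← hu'] at hu hO ⊢
    obtain ⟨e, he⟩ : ∃ e, e = (1 + s) * u * (1 - φ) := ⟨_, rfl⟩
    have he0 : 0 ≤ e := by
      rw [he]; have : 0 ≤ 1 - φ := by linarith
      positivity
    have he1 : e ≤ 105/100 * (3 * s ^ 8) := by
      rw [he]
      apply mul_le_mul g1 (by linarith) (by linarith) (by norm_num)
    have he2 : 3 * e ^ 2 ≤ 30 * s ^ 16 := by
      have : e ^ 2 ≤ (105/100 * (3 * s ^ 8)) ^ 2 := by gcongr
      have h16 : 0 ≤ s ^ 16 := by positivity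
      have h17 : (105/100 * (3 * s ^ 8)) ^ 2 = 99225/10000 * s ^ 16 := by ring
      rw [h17] at this
      linarith only [this, h16]
    obtain ⟨g, hg⟩ : ∃ g, g = -77/80+17/8*s^5+(1+s)*u := ⟨_, rfl⟩
    rw [← hg] at hO
    have e1 : z * (-77/80*s^3 + 17/8*s^8) + ZS s z * u = z * s ^ 3 * (g - e) := by
      rw [hZ, hg, he]; ring
    have e2 : (z * s ^ 3 * (g - e)) ^ 2 * u = s ^ 7 * (u * (g - e) ^ 2) := by
      calc _ = z ^ 2 * s ^ 6 * (u * (g - e) ^ 2) := by ring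
        _ = _ := by rw [hz]; ring
    have e3 : (z * (11/10*s^3 - s^8)) ^ 2 = s ^ 7 * (11/10 - s ^ 5) ^ 2 := by
      calc _ = z ^ 2 * (11/10*s^3 - s^8) ^ 2 := by ring
        _ = _ := by rw [hz]; ring
    rw [e1, e2, e3]
    have h3 : (g - e) ^ 2 ≤ 3/2 * g ^ 2 + 30 * s ^ 16 := by
      exact sq_sub_aux g e _ he2
    have h4 : u * (g - e) ^ 2 ≤ u * (3/2 * g ^ 2 + 30 * s ^ 16) := by gcongr
    have h5 : s ^ 7 * (u * (g - e) ^ 2) ≤ s ^ 7 * ((65/1600+108/10*s^5-(101/100*(1/32*(1-96/100*s)+48*(s^6-s^8)))*u)*(8/10*(3/2*u+65/400*s+72/10*s^6)-s*(11/10-s^5)^2)) := by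
      apply mul_le_mul_of_nonneg_left _ (by positivity)
      linarith
    refine h5.trans (le_of_eq ?_)
    ring

lemma inner_cond (s x z : ℝ) (hs : s = 1 - x) (h0 : 0 < x) (h1 : x ≤ 1 / 3) (hz : z ^ 2 = s) :
    0 < x * (1+1/2*x-77/10*x^2) ∧ ∃ Λ, 0 < Λ ∧
      Λ ≤ -(-(x * (s / 8 + 77/160 * s * (6 - 9 * x)))) - 101/100 * PS s * (x * (1+1/2*x-77/10*x^2)) ∧
      ((z * (1/8*x^3*(66/10-11*x) - s/4*x^2*(198/10-44*x))) + ZS s z * (x * (1+1/2*x-77/10*x^2))) ^ 2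
        * (x * (1+1/2*x-77/10*x^2)) ≤
      Λ * (32/10*s*(-1/4*x^4+s*x^3) * (x * (1+1/2*x-77/10*x^2))
         - (32/10*s*x^4) * (s/4*(1+x-231/10*x^2))
        - (z * (-x^3*(66/10-11*x))) ^ 2) := by
  have hs0 : 0 < s := by linarith
  obtain ⟨u, hu'⟩ : ∃ u, u = 1+1/2*x-77/10*x^2 := ⟨_, rfl⟩
  have hu : 0 < u := by rw [hu']; nlinarith
  have hL := cert_Lin x h0.le h1
  have hO := cert_I4 x h0.le h1
  have hP1 := cert_I1 x h0.le h1
  have hz1 := cert_I2 x h0.le h1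
  have hz2 := cert_I3 x h0.le h1
  obtain ⟨p, hp⟩ : ∃ p, p = 6/100-314/100*x+191*x^2-838*x^3+987*x^4 := ⟨_, rfl⟩
  obtain ⟨a, ha⟩ : ∃ a, a = 3991/1000+536/100*x-80*x^2+1195/10*x^3 := ⟨_, rfl⟩
  rw [← hu', ← hp] at hL
  rw [← hu', ← hp, ← ha] at hO
  rw [← hp, ← hs] at hP1
  rw [← ha, ← hs] at hz1 hz2
  rw [← hs] at hL hO
  rw [← hu']
  refine ⟨by positivity, x * (1/8*s+77/160*s*(6-9*x)-p*u), ?_, ?_, ?_⟩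
  · apply mul_pos h0; linarith
  · have hP : 101/100 * PS s ≤ p := by
      have a1 : s / (32 * (1 + s) ^ 2) ≤ 1 / 128 := by
        rw [div_le_iff₀ (by positivity)]; nlinarith [sq_nonneg (s - 1)]
      have a2 : 101/100 * (48 * s ^ 7 * (1 - s ^ 2) * (1 - s ^ 8) / (1 + s ^ 8) ^ 3) ≤ p - 101/12800 := by
        rw [← mul_div_assoc, div_le_iff₀ (by positivity)]
        linarith
      unfold PS; linarith
    have hxu : 0 ≤ x * u := by positivity
    have := mul_le_mul_of_nonneg_right hP hxu
    linarith
  · obtain ⟨b, hb⟩ : ∃ b, b = s^3*(1+s)^2*(1+s^2)*(1+s^4) / (1 + s ^ 8) ^ 2 := ⟨_, rfl⟩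
    have hZ : ZS s z = z * (x * b) := by
      rw [ZS, hb]
      have : x = 1 - s := by linarith
      rw [this]; ring
    have f1 : a - 2/100 ≤ b := by
      rw [hb, le_div_iff₀ (by positivity)]; linarith
    have f2 : b ≤ a + 2/100 := by
      rw [hb, div_le_iff₀ (by positivity)]; linarith
    obtain ⟨e, he⟩ : ∃ e, e = (b - a) * u := ⟨_, rfl⟩
    have he2 : 3 * e ^ 2 ≤ 3 * (2/100) ^ 2 * u ^ 2 := by
      rw [he, mul_pow]
      have : (b - a) ^ 2 ≤ (2/100) ^ 2 := by apply sq_le_sq' <;> linarith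
      have h2 := mul_le_mul_of_nonneg_right this (sq_nonneg u)
      linarith
    obtain ⟨g, hg⟩ : ∃ g, g = 1/8*x*(66/10-11*x)-1/4*s*(198/10-44*x)+a*u := ⟨_, rfl⟩
    rw [← hg] at hO
    have e1 : z * (1/8*x^3*(66/10-11*x) - s/4*x^2*(198/10-44*x)) + ZS s z * (x * u)
        = z * x ^ 2 * (g + e) := by
      rw [hZ, hg, he]; ring
    have e2 : (z * x ^ 2 * (g + e)) ^ 2 * (x * u) = s * x ^ 5 * (u * (g + e) ^ 2) := by
      calc _ = z ^ 2 * x ^ 5 * (u * (g + e) ^ 2) := by ring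
        _ = _ := by rw [hz]
    have e3 : (z * (-x^3*(66/10-11*x))) ^ 2 = s * x ^ 6 * (66/10-11*x) ^ 2 := by
      calc _ = z ^ 2 * x ^ 6 * (66/10-11*x) ^ 2 := by ring
        _ = _ := by rw [hz]
    rw [e1, e2, e3]
    have h3 : (g + e) ^ 2 ≤ 3/2 * g ^ 2 + 3 * (2/100) ^ 2 * u ^ 2 := by
      have := sq_sub_aux g (-e) (3 * (2/100) ^ 2 * u ^ 2) (by rw [neg_sq]; exact he2)
      rwa [sub_neg_eq_add] at this
    have h4 : u * (g + e) ^ 2 ≤ u * (3/2 * g ^ 2 + 3 * (2/100) ^ 2 * u ^ 2) := by gcongr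
    have h5 : s * x ^ 5 * (u * (g + e) ^ 2) ≤ s * x ^ 5 * ((1/8*s+77/160*s*(6-9*x)-p*u)*(32/10*(-1/4*x*u+s*u-1/4*s*(1+x-231/10*x^2))-x^2*(66/10-11*x)^2)) := by
      apply mul_le_mul_of_nonneg_left _ (by positivity)
      linarith
    refine h5.trans (le_of_eq ?_)
    ring

/-- The boundary functional. -/
noncomputable def bdF (L : ℝ) (u u1 G K w : ℝ → ℝ) (y : ℝ) : ℝ :=
  (-u1 y * w y ^ 2 + 2 * L * (G y * w y) + L ^ 2 * K y) / u y

lemma bdF_deriv (L : ℝ) (u u1 u2 G G1 K K1 w w1 : ℝ → ℝ) (y : ℝ)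
    (hu : HasDerivAt u (u1 y) y) (hu1 : HasDerivAt u1 (u2 y) y)
    (hG : HasDerivAt G (G1 y) y) (hK : HasDerivAt K (K1 y) y)
    (hw : HasDerivAt w (w1 y) y) (h0 : u y ≠ 0) :
    HasDerivAt (bdF L u u1 G K w)
      (((-u2 y * w y ^ 2 - u1 y * (2 * w y * w1 y) + 2 * L * (G1 y * w y + G y * w1 y)
        + L ^ 2 * K1 y) * u y
        - (-u1 y * w y ^ 2 + 2 * L * (G y * w y) + L ^ 2 * K y) * u1 y) / u y ^ 2) y := by
  have h1 : HasDerivAt (fun y => -u1 y * w y ^ 2)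
      (-u2 y * w y ^ 2 - u1 y * (2 * w y * w1 y)) y := by
    refine (hu1.fun_neg.fun_mul (hw.fun_pow 2)).congr_deriv ?_
    norm_num; ring
  have h2 : HasDerivAt (fun y => 2 * L * (G y * w y)) (2 * L * (G1 y * w y + G y * w1 y)) y :=
    (hG.fun_mul hw).const_mul _
  have h3 : HasDerivAt (fun y => L ^ 2 * K y) (L ^ 2 * K1 y) y := hK.const_mul _
  exact ((h1.fun_add h2).fun_add h3).fun_div hu h0

lemma seg (a b L : ℝ) (hab : a ≤ b) (u u1 u2 G G1 K K1 w w1 Q Z : ℝ → ℝ)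
    (hu : ∀ y, HasDerivAt u (u1 y) y) (hu1 : ∀ y, HasDerivAt u1 (u2 y) y)
    (hG : ∀ y, HasDerivAt G (G1 y) y) (hK : ∀ y, HasDerivAt K (K1 y) y)
    (hw : ∀ y, HasDerivAt w (w1 y) y)
    (hF : ContinuousOn (bdF L u u1 G K w) (Set.Icc a b))
    (hc : ∀ y ∈ Set.Ioo a b, 0 < u y ∧ ∃ Λ, 0 < Λ ∧ Λ ≤ -u2 y - Q y * u y ∧
      (G1 y + Z y * u y) ^ 2 * u y ≤ Λ * (K1 y * u y - K y * u1 y - G y ^ 2))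
    (hI : IntegrableOn (fun y => w1 y ^ 2 - Q y * w y ^ 2 + 2 * L * (Z y * w y)) (Set.Icc a b)) :
    bdF L u u1 G K w a - bdF L u u1 G K w b ≤
      ∫ y in a..b, (w1 y ^ 2 - Q y * w y ^ 2 + 2 * L * (Z y * w y)) := by
  have := intervalIntegral.sub_le_integral_of_hasDeriv_right_of_le
    (g := fun y => - bdF L u u1 G K w y)
    (g' := fun y => - (((-u2 y * w y ^ 2 - u1 y * (2 * w y * w1 y)
        + 2 * L * (G1 y * w y + G y * w1 y) + L ^ 2 * K1 y) * u y
        - (-u1 y * w y ^ 2 + 2 * L * (G y * w y) + L ^ 2 * K y) * u1 y) / u y ^ 2))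
    hab hF.neg ?_ hI ?_
  · linarith
  · intro y hy
    exact (bdF_deriv L u u1 u2 G G1 K K1 w w1 y (hu y) (hu1 y) (hG y) (hK y) (hw y)
      (hc y hy).1.ne').neg.hasDerivWithinAt
  · intro y hy
    obtain ⟨h0, Λ, h1, h2, h3⟩ := hc y hy
    have := core_ineq (u y) (u1 y) (u2 y) (G y) (G1 y) (K y) (K1 y) (w y) (w1 y) L (Q y) (Z y) Λ
      h0 h1 h2 h3
    linarith

noncomputable def sS (y : ℝ) : ℝ := Real.exp (-y / 4)
noncomputable def zZ (y : ℝ) : ℝ := Real.exp (-y / 8)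

lemma sS_pos (y : ℝ) : 0 < sS y := Real.exp_pos _
lemma zZ_pos (y : ℝ) : 0 < zZ y := Real.exp_pos _
lemma zZ_sq (y : ℝ) : zZ y ^ 2 = sS y := by
  rw [zZ, sS, ← Real.exp_nat_mul]; congr 1; push_cast; ring
lemma sS_deriv (y : ℝ) : HasDerivAt sS (-(1/4) * sS y) y := by
  have : HasDerivAt (fun y : ℝ => -y / 4) (-1/4) y := ((hasDerivAt_id y).fun_neg).div_const 4
  refine this.exp.congr_deriv ?_
  rw [sS]; ring
lemma zZ_deriv (y : ℝ) : HasDerivAt zZ (-(1/8) * zZ y) y := by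
  have : HasDerivAt (fun y : ℝ => -y / 8) (-1/8) y := ((hasDerivAt_id y).fun_neg).div_const 8
  refine this.exp.congr_deriv ?_
  rw [zZ]; ring
lemma sSn_deriv (n : ℕ) (y : ℝ) : HasDerivAt (fun y => sS y ^ n) (-(n/4) * sS y ^ n) y := by
  rcases n with _ | n
  · simpa using hasDerivAt_const y (1:ℝ)
  · refine ((sS_deriv y).fun_pow (n+1)).congr_deriv ?_
    simp [pow_succ]; ring
lemma sS_cont : Continuous sS := by unfold sS; fun_prop
lemma zZ_cont : Continuous zZ := by unfold zZ; fun_prop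

/-- split point -/
noncomputable def pp : ℝ := 4 * Real.log (3 / 2)
lemma pp_pos : 0 < pp := by
  have : 0 < Real.log (3/2) := Real.log_pos (by norm_num)
  unfold pp; linarith
lemma sS_pp : sS pp = 2 / 3 := by
  rw [sS, pp, show -(4 * Real.log (3/2)) / 4 = Real.log ((3/2)⁻¹) by rw [Real.log_inv]; ring,
    Real.exp_log (by norm_num)]; norm_num
lemma sS_anti {a b : ℝ} (h : a ≤ b) : sS b ≤ sS a := by
  unfold sS; apply Real.exp_le_exp.2; linarith
lemma sS_anti' {a b : ℝ} (h : a < b) : sS b < sS a := by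
  unfold sS; apply Real.exp_lt_exp.2; linarith
lemma sS_zero : sS 0 = 1 := by simp [sS]

/-! outer functions -/
noncomputable def uo (y : ℝ) : ℝ := 1 - 65/100 * sS y - 48/10 * sS y ^ 6
noncomputable def uo1 (y : ℝ) : ℝ := 65/400 * sS y + 72/10 * sS y ^ 6
noncomputable def uo2 (y : ℝ) : ℝ := -(65/1600 * sS y + 108/10 * sS y ^ 6)
noncomputable def Go (y : ℝ) : ℝ := zZ y * (11/10 * sS y ^ 3 - sS y ^ 8)
noncomputable def Go1 (y : ℝ) : ℝ := zZ y * (-77/80 * sS y ^ 3 + 17/8 * sS y ^ 8)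
noncomputable def Ko (y : ℝ) : ℝ := -8/10 * sS y ^ 6
noncomputable def Ko1 (y : ℝ) : ℝ := 12/10 * sS y ^ 6

lemma uo_deriv (y : ℝ) : HasDerivAt uo (uo1 y) y := by
  refine (((sS_deriv y).const_mul (65/100)).const_sub 1 |>.fun_sub
    ((sSn_deriv 6 y).const_mul (48/10))).congr_deriv ?_
  unfold uo1; push_cast; ring
lemma uo1_deriv (y : ℝ) : HasDerivAt uo1 (uo2 y) y := by
  refine (((sS_deriv y).const_mul (65/400)).fun_add
    ((sSn_deriv 6 y).const_mul (72/10))).congr_deriv ?_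
  unfold uo2; push_cast; ring
lemma Go_deriv (y : ℝ) : HasDerivAt Go (Go1 y) y := by
  refine ((zZ_deriv y).fun_mul (((sSn_deriv 3 y).const_mul (11/10)).fun_sub
    (sSn_deriv 8 y))).congr_deriv ?_
  unfold Go1; push_cast; ring
lemma Ko_deriv (y : ℝ) : HasDerivAt Ko (Ko1 y) y := by
  refine ((sSn_deriv 6 y).const_mul (-8/10)).congr_deriv ?_
  unfold Ko1; push_cast; ring

/-! inner functions -/
noncomputable def ui (y : ℝ) : ℝ :=
  (1 - sS y) * (1 + 1/2 * (1 - sS y) - 77/10 * (1 - sS y) ^ 2)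
noncomputable def ui1 (y : ℝ) : ℝ := sS y / 4 * (1 + (1 - sS y) - 231/10 * (1 - sS y) ^ 2)
noncomputable def ui2 (y : ℝ) : ℝ :=
  -((1 - sS y) * (sS y / 8 + 77/160 * sS y * (6 - 9 * (1 - sS y))))
noncomputable def Gi (y : ℝ) : ℝ := zZ y * (-(1 - sS y) ^ 3 * (66/10 - 11 * (1 - sS y)))
noncomputable def Gi1 (y : ℝ) : ℝ :=
  zZ y * (1/8 * (1 - sS y) ^ 3 * (66/10 - 11 * (1 - sS y))
    - sS y / 4 * (1 - sS y) ^ 2 * (198/10 - 44 * (1 - sS y)))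
noncomputable def Ki (y : ℝ) : ℝ := 32/10 * sS y * (1 - sS y) ^ 4
noncomputable def Ki1 (y : ℝ) : ℝ :=
  32/10 * sS y * (-1/4 * (1 - sS y) ^ 4 + sS y * (1 - sS y) ^ 3)

lemma x_deriv (y : ℝ) : HasDerivAt (fun y => 1 - sS y) (sS y / 4) y := by
  refine ((sS_deriv y).const_sub 1).congr_deriv ?_
  ring
lemma ui_deriv (y : ℝ) : HasDerivAt ui (ui1 y) y := by
  refine ((x_deriv y).fun_mul ((((x_deriv y).const_mul (1/2)).const_add 1).fun_sub
    (((x_deriv y).fun_pow 2).const_mul (77/10)))).congr_deriv ?_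
  unfold ui1; push_cast; ring
lemma ui1_deriv (y : ℝ) : HasDerivAt ui1 (ui2 y) y := by
  refine (((sS_deriv y).div_const 4).fun_mul (((x_deriv y).const_add 1).fun_sub
    (((x_deriv y).fun_pow 2).const_mul (231/10)))).congr_deriv ?_
  unfold ui2; push_cast; ring
lemma Gi_deriv (y : ℝ) : HasDerivAt Gi (Gi1 y) y := by
  refine ((zZ_deriv y).fun_mul ((((x_deriv y).fun_pow 3).fun_neg).fun_mul
    (((x_deriv y).const_mul 11).const_sub (66/10)))).congr_deriv ?_
  unfold Gi1; push_cast; ring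
lemma Ki_deriv (y : ℝ) : HasDerivAt Ki (Ki1 y) y := by
  refine (((sS_deriv y).const_mul (32/10)).fun_mul ((x_deriv y).fun_pow 4)).congr_deriv ?_
  unfold Ki1; push_cast; ring

lemma seg_outer (R L : ℝ) (hR : pp ≤ R) (w w1 : ℝ → ℝ) (hw : ∀ y, HasDerivAt w (w1 y) y)
    (hI : IntegrableOn (fun y => w1 y ^ 2 - 101/100 * PS (sS y) * w y ^ 2
      + 2 * L * (ZS (sS y) (zZ y) * w y)) (Set.Icc pp R)) :
    bdF L uo uo1 Go Ko w pp - bdF L uo uo1 Go Ko w R ≤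
      ∫ y in pp..R, (w1 y ^ 2 - 101/100 * PS (sS y) * w y ^ 2
      + 2 * L * (ZS (sS y) (zZ y) * w y)) := by
  have hcond : ∀ y, pp ≤ y → _ := fun y hy =>
    outer_cond (sS y) (zZ y) (sS_pos y) (by rw [← sS_pp]; exact sS_anti hy) (zZ_sq y)
  apply seg pp R L hR uo uo1 uo2 Go Go1 Ko Ko1 w w1 (fun y => 101/100 * PS (sS y))
    (fun y => ZS (sS y) (zZ y)) uo_deriv uo1_deriv Go_deriv Ko_deriv hw
  · intro y hy
    exact (bdF_deriv L uo uo1 uo2 Go Go1 Ko Ko1 w w1 y (uo_deriv y) (uo1_deriv y) (Go_deriv y)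
      (Ko_deriv y) (hw y) (hcond y hy.1).1.ne').continuousAt.continuousWithinAt
  · intro y hy
    exact hcond y hy.1.le
  · exact hI

lemma cont_sq_div (w w1 : ℝ → ℝ) (hw : ∀ y, HasDerivAt w (w1 y) y) (h0 : w 0 = 0) :
    ContinuousAt (fun y => w y ^ 2 / (1 - sS y)) 0 := by
  rw [continuousAt_iff_punctured_nhds]
  have a1 := (hw 0).tendsto_slope_zero
  have a2 := (x_deriv 0).tendsto_slope_zero
  have a3 : Filter.Tendsto w (nhdsWithin 0 {0}ᶜ) (nhds 0) := by
    have := (hw 0).continuousAt.tendsto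
    rw [h0] at this
    exact this.mono_left nhdsWithin_le_nhds
  have a4 := a3.mul (a1.div a2 (by rw [sS_zero]; norm_num))
  simp only [sS_zero, sub_self, div_zero, zero_mul] at a4 ⊢
  refine a4.congr' ?_
  filter_upwards [self_mem_nhdsWithin] with t ht
  have ht' : t ≠ 0 := ht
  have hs : 1 - sS t ≠ 0 := by
    intro h
    rcases lt_or_gt_of_ne ht' with h1 | h1
    · have := sS_anti' h1; rw [sS_zero] at this; linarith
    · have := sS_anti' h1; rw [sS_zero] at this; linarith
  simp only [Pi.div_apply, zero_add, h0, sub_zero, smul_eq_mul]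
  field_simp

lemma seg_inner (L : ℝ) (w w1 : ℝ → ℝ) (hw : ∀ y, HasDerivAt w (w1 y) y) (h0 : w 0 = 0)
    (hI : IntegrableOn (fun y => w1 y ^ 2 - 101/100 * PS (sS y) * w y ^ 2
      + 2 * L * (ZS (sS y) (zZ y) * w y)) (Set.Icc 0 pp)) :
    - bdF L ui ui1 Gi Ki w pp ≤
      ∫ y in (0:ℝ)..pp, (w1 y ^ 2 - 101/100 * PS (sS y) * w y ^ 2
      + 2 * L * (ZS (sS y) (zZ y) * w y)) := by
  have hcond : ∀ y, 0 < y → y ≤ pp → _ := fun y hy hy2 =>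
    inner_cond (sS y) (1 - sS y) (zZ y) (by ring)
      (by have := sS_anti' hy; rw [sS_zero] at this; linarith)
      (by have := sS_anti hy2; rw [sS_pp] at this; linarith) (zZ_sq y)
  have hz : bdF L ui ui1 Gi Ki w 0 = 0 := by
    simp [bdF, ui, sS_zero]
  have := seg 0 pp L pp_pos.le ui ui1 ui2 Gi Gi1 Ki Ki1 w w1 (fun y => 101/100 * PS (sS y))
    (fun y => ZS (sS y) (zZ y)) ui_deriv ui1_deriv Gi_deriv Ki_deriv hw ?_ ?_ hI
  · rw [hz] at this; linarith
  · intro y hy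
    rcases eq_or_lt_of_le hy.1 with h | h
    · subst h
      apply ContinuousAt.continuousWithinAt
      have e : bdF L ui ui1 Gi Ki w = fun y =>
          (-(ui1 y) * (w y ^ 2 / (1 - sS y)) +
            2 * L * (zZ y * (-(1 - sS y) ^ 2 * (66/10 - 11 * (1 - sS y))) * w y)
            + L ^ 2 * (32/10 * sS y * (1 - sS y) ^ 3))
            / (1 + 1/2 * (1 - sS y) - 77/10 * (1 - sS y) ^ 2) := by
        funext y
        unfold bdF ui Gi Ki
        by_cases hx : 1 - sS y = 0
        · simp [hx]
        · rw [← div_div]; congr 1; field_simp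
      rw [e]
      have c1 := cont_sq_div w w1 hw h0
      have c2 : ContinuousAt ui1 0 := (ui1_deriv 0).continuousAt
      have c3 : ContinuousAt w 0 := (hw 0).continuousAt
      have c4 : ContinuousAt sS 0 := sS_cont.continuousAt
      have c5 : ContinuousAt zZ 0 := zZ_cont.continuousAt
      apply ContinuousAt.div
      · fun_prop
      · fun_prop
      · rw [sS_zero]; norm_num
    · exact (bdF_deriv L ui ui1 ui2 Gi Gi1 Ki Ki1 w w1 y (ui_deriv y) (ui1_deriv y) (Gi_deriv y)
        (Ki_deriv y) (hw y) (hcond y h hy.2).1.ne').continuousAt.continuousWithinAt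
  · intro y hy
    exact hcond y hy.1 hy.2.le

lemma PS_bound (s : ℝ) (h0 : 0 < s) (h1 : s ≤ 1) : |PS s| ≤ 49 := by
  have a1 : 0 ≤ s / (32 * (1 + s) ^ 2) := by positivity
  have a2 : s / (32 * (1 + s) ^ 2) ≤ 1 := by
    rw [div_le_one (by positivity)]; nlinarith
  have b1 : 0 ≤ 1 - s ^ 2 := by nlinarith
  have b1' : 1 - s ^ 2 ≤ 1 := by nlinarith
  have b2 : 0 ≤ 1 - s ^ 8 := by have : s ^ 8 ≤ 1 := pow_le_one₀ h0.le h1; linarith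
  have h8 : 0 ≤ s ^ 8 := by positivity
  have b2' : 1 - s ^ 8 ≤ 1 := by linarith
  have b3 : s ^ 7 ≤ 1 := pow_le_one₀ h0.le h1
  have a3 : 0 ≤ 48 * s ^ 7 * (1 - s ^ 2) * (1 - s ^ 8) / (1 + s ^ 8) ^ 3 := by positivity
  have a4 : 48 * s ^ 7 * (1 - s ^ 2) * (1 - s ^ 8) / (1 + s ^ 8) ^ 3 ≤ 48 := by
    rw [div_le_iff₀ (by positivity)]
    have c1 : (1:ℝ) ≤ (1 + s ^ 8) ^ 3 := one_le_pow₀ (by linarith)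
    calc 48 * s ^ 7 * (1 - s ^ 2) * (1 - s ^ 8) ≤ 48 * 1 * 1 * 1 := by gcongr
      _ ≤ _ := by linarith
  rw [PS, abs_of_nonneg (by linarith)]; linarith

lemma ZS_bound (s z : ℝ) (h0 : 0 < s) (h1 : s ≤ 1) (hz : z ^ 2 = s) : ZS s z ^ 2 ≤ 4 * s := by
  have h8 : 0 ≤ s ^ 8 := by positivity
  have b2 : 0 ≤ 1 - s ^ 8 := by have : s ^ 8 ≤ 1 := pow_le_one₀ h0.le h1; linarith
  have b3 : s ^ 3 ≤ 1 := pow_le_one₀ h0.le h1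
  have a0 : 0 ≤ s ^ 3 * (1 + s) * (1 - s ^ 8) / (1 + s ^ 8) ^ 2 := by positivity
  have a4 : s ^ 3 * (1 + s) * (1 - s ^ 8) / (1 + s ^ 8) ^ 2 ≤ 2 := by
    rw [div_le_iff₀ (by positivity)]
    have c1 : (1:ℝ) ≤ (1 + s ^ 8) ^ 2 := one_le_pow₀ (by linarith)
    calc s ^ 3 * (1 + s) * (1 - s ^ 8) ≤ 1 * (1 + 1) * 1 := by gcongr; linarith
      _ ≤ _ := by linarith
  rw [ZS, mul_pow, hz, mul_comm]
  have : (s ^ 3 * (1 + s) * (1 - s ^ 8) / (1 + s ^ 8) ^ 2) ^ 2 ≤ 2 ^ 2 := by gcongr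
  nlinarith

lemma sS_le_one {y : ℝ} (h : 0 ≤ y) : sS y ≤ 1 := by
  have := sS_anti h; rwa [sS_zero] at this

lemma sS_tendsto : Filter.Tendsto sS Filter.atTop (nhds 0) := by
  unfold sS
  apply Real.tendsto_exp_atBot.comp
  have : (fun y : ℝ => -y / 4) = fun y => (-(1/4)) * y := by funext y; ring
  rw [this]
  exact Filter.tendsto_id.const_mul_atTop_of_neg (by norm_num)

lemma zZ_tendsto : Filter.Tendsto zZ Filter.atTop (nhds 0) := by
  unfold zZ
  apply Real.tendsto_exp_atBot.comp
  have : (fun y : ℝ => -y / 8) = fun y => (-(1/8)) * y := by funext y; ring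
  rw [this]
  exact Filter.tendsto_id.const_mul_atTop_of_neg (by norm_num)

lemma sS_integrable : IntegrableOn sS (Set.Ioi 0) := by
  have := exp_neg_integrableOn_Ioi 0 (show (0:ℝ) < 1/4 by norm_num)
  refine this.congr_fun (fun y _ => ?_) measurableSet_Ioi
  simp only [sS]; congr 1; ring

lemma int_P (w w1 : ℝ → ℝ) (hw : ∀ y, HasDerivAt w (w1 y) y)
    (hW : IntegrableOn (fun y => w y ^ 2) (Set.Ioi 0)) :
    IntegrableOn (fun y => PS (sS y) * w y ^ 2) (Set.Ioi 0) := by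
  have hc : Continuous w := continuous_iff_continuousAt.2 fun y => (hw y).continuousAt
  refine Integrable.mono' (hW.const_mul 49) ?_ ?_
  · apply Measurable.aestronglyMeasurable
    have := sS_cont.measurable
    have := hc.measurable
    unfold PS; fun_prop
  · filter_upwards [self_mem_ae_restrict measurableSet_Ioi] with y hy
    rw [Real.norm_eq_abs, abs_mul, abs_of_nonneg (sq_nonneg (w y))]
    have := PS_bound (sS y) (sS_pos y) (sS_le_one (le_of_lt hy))
    gcongr

lemma int_Z (w w1 : ℝ → ℝ) (hw : ∀ y, HasDerivAt w (w1 y) y)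
    (hW : IntegrableOn (fun y => w y ^ 2) (Set.Ioi 0)) :
    IntegrableOn (fun y => ZS (sS y) (zZ y) * w y) (Set.Ioi 0) := by
  have hc : Continuous w := continuous_iff_continuousAt.2 fun y => (hw y).continuousAt
  refine Integrable.mono' ((sS_integrable.const_mul 4).add hW) ?_ ?_
  · apply Measurable.aestronglyMeasurable
    have := sS_cont.measurable
    have := zZ_cont.measurable
    have := hc.measurable
    unfold ZS; fun_prop
  · filter_upwards [self_mem_ae_restrict measurableSet_Ioi] with y hy
    have := ZS_bound (sS y) (zZ y) (sS_pos y) (sS_le_one (le_of_lt hy)) (zZ_sq y)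
    rw [Real.norm_eq_abs, Pi.add_apply, abs_le]
    constructor <;> nlinarith [sq_nonneg (ZS (sS y) (zZ y) + w y), sq_nonneg (ZS (sS y) (zZ y) - w y)]

lemma w_tendsto (w w1 : ℝ → ℝ) (hw : ∀ y, HasDerivAt w (w1 y) y)
    (hW : IntegrableOn (fun y => w y ^ 2) (Set.Ioi 0))
    (hW1 : IntegrableOn (fun y => w1 y ^ 2) (Set.Ioi 0)) (hm : Measurable w1) :
    Filter.Tendsto w Filter.atTop (nhds 0) := by
  have hc : Continuous w := continuous_iff_continuousAt.2 fun y => (hw y).continuousAt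
  have h := tendsto_zero_of_hasDerivAt_of_integrableOn_Ioi (f := fun y => w y ^ 2)
    (f' := fun y => 2 * w y * w1 y) (a := 0) ?_ ?_ hW
  · have h2 := h.sqrt
    simp only [Real.sqrt_sq_eq_abs, Real.sqrt_zero] at h2
    exact (tendsto_zero_iff_abs_tendsto_zero w).2 h2
  · intro y _
    refine ((hw y).fun_pow 2).congr_deriv ?_
    norm_num
  · refine Integrable.mono' (hW.add hW1) ?_ ?_
    · apply Measurable.aestronglyMeasurable
      have := hc.measurable
      fun_prop
    · filter_upwards with y
      rw [Real.norm_eq_abs, Pi.add_apply, abs_le]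
      constructor <;> nlinarith [sq_nonneg (w y + w1 y), sq_nonneg (w y - w1 y)]

lemma bdF_tendsto (L : ℝ) (w : ℝ → ℝ) (hw : Filter.Tendsto w Filter.atTop (nhds 0)) :
    Filter.Tendsto (bdF L uo uo1 Go Ko w) Filter.atTop (nhds 0) := by
  have hs := sS_tendsto
  have hz := zZ_tendsto
  have h1 : Filter.Tendsto uo Filter.atTop (nhds (1 - 65/100 * 0 - 48/10 * 0 ^ 6)) :=
    (tendsto_const_nhds.sub (hs.const_mul _)).sub ((hs.pow 6).const_mul _)
  have h2 : Filter.Tendsto uo1 Filter.atTop (nhds (65/400 * 0 + 72/10 * 0 ^ 6)) :=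
    (hs.const_mul _).add ((hs.pow 6).const_mul _)
  have h3 : Filter.Tendsto Go Filter.atTop (nhds (0 * (11/10 * 0 ^ 3 - 0 ^ 8))) :=
    hz.mul (((hs.pow 3).const_mul _).sub (hs.pow 8))
  have h4 : Filter.Tendsto Ko Filter.atTop (nhds (-8/10 * 0 ^ 6)) := (hs.pow 6).const_mul _
  have h5 := (((h2.neg.mul (hw.pow 2)).add ((h3.mul hw).const_mul (2 * L))).add
    (h4.const_mul (L ^ 2))).div h1 (by norm_num)
  have e : ((-(65/400 * 0 + 72/10 * 0 ^ 6) * 0 ^ 2 + 2 * L * (0 * (11/10 * 0 ^ 3 - 0 ^ 8) * 0) +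
      L ^ 2 * (-8/10 * 0 ^ 6)) / (1 - 65/100 * 0 - 48/10 * 0 ^ 6) : ℝ) = 0 := by ring
  rw [e] at h5
  exact h5

lemma bd_pos (w : ℝ → ℝ) :
    w pp ^ 2 ≤ bdF (7/2 * w pp) uo uo1 Go Ko w pp - bdF (7/2 * w pp) ui ui1 Gi Ki w pp := by
  have hz : (8164/10000 : ℝ) ≤ zZ pp := by
    have h1 := zZ_sq pp
    rw [sS_pp] at h1
    have := zZ_pos pp
    nlinarith
  unfold bdF uo uo1 Go Ko ui ui1 Gi Ki
  rw [sS_pp]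
  obtain ⟨z, hz'⟩ : ∃ z, z = zZ pp := ⟨_, rfl⟩
  obtain ⟨b, hb⟩ : ∃ b, b = w pp := ⟨_, rfl⟩
  rw [← hz'] at hz ⊢
  rw [← hb]
  have hb2 := sq_nonneg b
  have : 0 ≤ (z - 8164/10000) * b ^ 2 := mul_nonneg (by linarith) hb2
  ring_nf
  nlinarith

theorem half_line (w w1 : ℝ → ℝ) (hw : ∀ y, HasDerivAt w (w1 y) y) (h0 : w 0 = 0)
    (hW : IntegrableOn (fun y => w y ^ 2) (Set.Ioi 0))
    (hW1 : IntegrableOn (fun y => w1 y ^ 2) (Set.Ioi 0)) (hm : Measurable w1) :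
    -(49/4) * (∫ y in Set.Ioi 0, ZS (sS y) (zZ y) * w y) ^ 2 ≤
      (∫ y in Set.Ioi 0, w1 y ^ 2) - 101/100 * ∫ y in Set.Ioi 0, PS (sS y) * w y ^ 2 := by
  have iP := int_P w w1 hw hW
  have iZ := int_Z w w1 hw hW
  obtain ⟨L, hL⟩ : ∃ L, L = 7/2 * w pp := ⟨_, rfl⟩
  obtain ⟨h, hh⟩ : ∃ h : ℝ → ℝ, h = fun y => w1 y ^ 2 - 101/100 * PS (sS y) * w y ^ 2
      + 2 * L * (ZS (sS y) (zZ y) * w y) := ⟨_, rfl⟩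
  have hh' : h = fun y => w1 y ^ 2 - 101/100 * (PS (sS y) * w y ^ 2)
      + 2 * L * (ZS (sS y) (zZ y) * w y) := by rw [hh]; funext y; ring
  have hI : IntegrableOn h (Set.Ioi 0) := by
    rw [hh']
    exact (hW1.sub (iP.const_mul _)).add (iZ.const_mul _)
  have hIci : IntegrableOn h (Set.Ici 0) := by
    rw [integrableOn_Ici_iff_integrableOn_Ioi]; exact hI
  have hval : ∫ y in Set.Ioi 0, h y = (∫ y in Set.Ioi 0, w1 y ^ 2)
      - 101/100 * (∫ y in Set.Ioi 0, PS (sS y) * w y ^ 2)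
      + 2 * L * ∫ y in Set.Ioi 0, ZS (sS y) (zZ y) * w y := by
    rw [hh']
    have j1 : Integrable (fun y => w1 y ^ 2 - 101/100 * (PS (sS y) * w y ^ 2))
      (volume.restrict (Set.Ioi 0)) := hW1.sub (iP.const_mul _)
    have j2 : Integrable (fun y => 2 * L * (ZS (sS y) (zZ y) * w y))
      (volume.restrict (Set.Ioi 0)) := iZ.const_mul _
    have j3 : Integrable (fun y => 101/100 * (PS (sS y) * w y ^ 2))
      (volume.restrict (Set.Ioi 0)) := iP.const_mul _
    rw [integral_add j1 j2, integral_sub hW1 j3, integral_const_mul, integral_const_mul]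
  have hin := seg_inner L w w1 hw h0 (by
    rw [← hh]; exact hIci.mono_set Set.Icc_subset_Ici_self)
  rw [← hh] at hin
  have hout : ∀ R, pp ≤ R → bdF L uo uo1 Go Ko w pp - bdF L uo uo1 Go Ko w R ≤
      ∫ y in pp..R, h y := by
    intro R hR
    have := seg_outer R L hR w w1 hw (by
      rw [← hh]
      exact hIci.mono_set (fun y hy => le_trans pp_pos.le hy.1))
    rwa [← hh] at this
  have ii : ∀ a b, 0 ≤ a → 0 ≤ b → IntervalIntegrable h volume a b := by
    intro a b ha hb
    rw [intervalIntegrable_iff]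
    apply hI.mono_set
    intro y hy
    exact lt_of_le_of_lt (le_min ha hb) hy.1
  have hall : ∀ R, pp ≤ R → bdF L uo uo1 Go Ko w pp - bdF L ui ui1 Gi Ki w pp
      - bdF L uo uo1 Go Ko w R ≤ ∫ y in (0:ℝ)..R, h y := by
    intro R hR
    have := hout R hR
    rw [← intervalIntegral.integral_add_adjacent_intervals (ii 0 pp le_rfl pp_pos.le)
      (ii pp R pp_pos.le (pp_pos.le.trans hR))]
    linarith
  have hT := (bdF_tendsto L w (w_tendsto w w1 hw hW hW1 hm)).const_sub
    (bdF L uo uo1 Go Ko w pp - bdF L ui ui1 Gi Ki w pp)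
  have hT2 := intervalIntegral_tendsto_integral_Ioi 0 hI Filter.tendsto_id
  have hfin := le_of_tendsto_of_tendsto hT hT2 (by
    filter_upwards [Filter.eventually_ge_atTop pp] with R hR using hall R hR)
  have hb := bd_pos w
  rw [← hL] at hb
  rw [hval] at hfin
  obtain ⟨J, hJ⟩ : ∃ J, J = ∫ y in Set.Ioi 0, ZS (sS y) (zZ y) * w y := ⟨_, rfl⟩
  rw [← hJ] at hfin ⊢
  subst hL
  nlinarith [sq_nonneg (w pp - 7/2 * J)]

lemma tanh_sS (y : ℝ) : Real.tanh y = (1 - sS y ^ 8) / (1 + sS y ^ 8) := by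
  have h : sS y ^ 8 = Real.exp (-y) ^ 2 := by
    rw [sS, ← Real.exp_nat_mul, ← Real.exp_nat_mul]; congr 1; push_cast; ring
  have h1 : Real.exp y = (Real.exp (-y))⁻¹ := by rw [Real.exp_neg, inv_inv]
  have h2 := Real.exp_pos (-y)
  rw [Real.tanh_eq_sinh_div_cosh, Real.sinh_eq, Real.cosh_eq, h, h1]
  field_simp

lemma sech_sS (y : ℝ) : sech y = 2 * sS y ^ 4 / (1 + sS y ^ 8) := by
  have h : sS y ^ 4 = Real.exp (-y) := by
    rw [sS, ← Real.exp_nat_mul]; congr 1; push_cast; ring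
  have h8 : sS y ^ 8 = Real.exp (-y) ^ 2 := by rw [← h]; ring
  have h1 : Real.exp y = (Real.exp (-y))⁻¹ := by rw [Real.exp_neg, inv_inv]
  have h2 := Real.exp_pos (-y)
  rw [sech, Real.cosh_eq, h8, h, h1]
  field_simp

lemma cosh_zZ (y : ℝ) : Real.cosh (y / 8) = (1 + sS y) / (2 * zZ y) := by
  have h1 : Real.exp (y / 8) = (zZ y)⁻¹ := by rw [zZ, ← Real.exp_neg]; congr 1; ring
  have h2 := zZ_pos y
  have h3 : Real.exp (-(y / 8)) = zZ y := by rw [zZ]; congr 1; ring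
  rw [Real.cosh_eq, h1, h3, ← zZ_sq]
  field_simp

lemma sinh_zZ (y : ℝ) : Real.sinh (y / 8) = (1 - sS y) / (2 * zZ y) := by
  have h1 : Real.exp (y / 8) = (zZ y)⁻¹ := by rw [zZ, ← Real.exp_neg]; congr 1; ring
  have h2 := zZ_pos y
  have h3 : Real.exp (-(y / 8)) = zZ y := by rw [zZ]; congr 1; ring
  rw [Real.sinh_eq, h1, h3, ← zZ_sq]
  field_simp

lemma arg1 (y : ℝ) : Real.sqrt 2 * y / (8 * Real.sqrt 2) = y / 8 := by
  have : Real.sqrt 2 ≠ 0 := by positivity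
  field_simp
lemma arg2 (y : ℝ) : Real.sqrt 2 * y / Real.sqrt 2 = y := by
  have : Real.sqrt 2 ≠ 0 := by positivity
  field_simp

lemma Vpot_eq (y : ℝ) : Vpot (Real.sqrt 2 * y) = 1/2 * PS (sS y) := by
  have hs := sS_pos y
  have hz := zZ_pos y
  have e1 : Real.tanh (y / 8) * Real.cosh (y / 8) ^ 2 = (1 - sS y ^ 2) / (4 * sS y) := by
    have : Real.cosh (y / 8) ≠ 0 := (Real.cosh_pos _).ne'
    calc _ = Real.sinh (y / 8) * Real.cosh (y / 8) := by
          rw [Real.tanh_eq_sinh_div_cosh]; field_simp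
      _ = (1 - sS y ^ 2) / (4 * zZ y ^ 2) := by rw [sinh_zZ, cosh_zZ]; field_simp; ring
      _ = _ := by rw [zZ_sq]
  have e2 : sech (y / 8) ^ 2 = 4 * sS y / (1 + sS y) ^ 2 := by
    calc _ = 4 * zZ y ^ 2 / (1 + sS y) ^ 2 := by rw [sech, cosh_zZ]; field_simp; norm_num
      _ = _ := by rw [zZ_sq]
  rw [Vpot, arg1, arg2, e2, mul_assoc 24, e1, tanh_sS, sech_sS, PS]
  field_simp
  ring

lemma Z1_eq (y : ℝ) : Z1 (Real.sqrt 2 * y) =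
    (2 : ℝ) ^ (-(3 : ℝ) / 4) * Real.sqrt 3 * ZS (sS y) (zZ y) := by
  have hz := zZ_pos y
  rw [Z1, arg1, arg2, tanh_sS, sech_sS, cosh_zZ, ZS, ← zZ_sq]
  field_simp

lemma sech_neg (x : ℝ) : sech (-x) = sech x := by rw [sech, sech, Real.cosh_neg]

lemma Vpot_neg (x : ℝ) : Vpot (-x) = Vpot x := by
  simp only [Vpot, neg_div, sech_neg, Real.tanh_neg, Real.cosh_neg]; ring

lemma Z1_neg (x : ℝ) : Z1 (-x) = -Z1 x := by
  simp only [Z1, neg_div, sech_neg, Real.tanh_neg, Real.cosh_neg]; ring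

lemma even_integral (f : ℝ → ℝ) (hf : ∀ x, f (-x) = f x) :
    ∫ x, f x = 2 * Real.sqrt 2 * ∫ y in Set.Ioi 0, f (Real.sqrt 2 * y) := by
  have h2 : 0 < Real.sqrt 2 := by positivity
  have h1 : ∫ x, f x = ∫ x, f |x| := by
    congr 1; funext x
    rcases abs_choice x with h | h <;> rw [h]
    rw [hf]
  rw [h1, integral_comp_abs, integral_comp_mul_left_Ioi f 0 h2, mul_zero, smul_eq_mul]
  field_simp

theorem coercivity_Bsharp_with_projection :
    ∃ C > 0, ∃ κ > 0, ∀ w : ℝ → ℝ,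
      (∀ x : ℝ, w (-x) = -w x) →
      Differentiable ℝ w →
      Integrable (fun x => (w x) ^ 2) →
      Integrable (fun x => (deriv w x) ^ 2) →
      (∫ x : ℝ, ((deriv w x) ^ 2 - Vpot x * (w x) ^ 2))
          + C * (∫ x : ℝ, w x * Z1 x) ^ 2
        ≥ κ * (∫ x : ℝ, (deriv w x) ^ 2) := by
  obtain ⟨c, hc⟩ : ∃ c, c = (2 : ℝ) ^ (-(3 : ℝ) / 4) * Real.sqrt 3 := ⟨_, rfl⟩
  have hc0 : 0 < c := by rw [hc]; positivity
  obtain ⟨r, hr⟩ : ∃ r, r = Real.sqrt 2 := ⟨_, rfl⟩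
  have hr0 : 0 < r := by rw [hr]; positivity
  have hr2 : r ^ 2 = 2 := by rw [hr]; norm_num
  refine ⟨r * (49/4) / (8 * c ^ 2), by positivity, 1/101, by norm_num, ?_⟩
  intro w hodd hd hi hi1
  have hde : ∀ x, deriv w (-x) = deriv w x := by
    intro x
    have h1 := deriv_comp_neg w x
    have h2 : (fun x => w (-x)) = fun x => - w x := funext hodd
    rw [h2, deriv.fun_neg] at h1
    linarith
  have hw0 : w 0 = 0 := by have := hodd 0; rw [neg_zero] at this; linarith
  obtain ⟨W, hW⟩ : ∃ W : ℝ → ℝ, W = fun y => w (r * y) := ⟨_, rfl⟩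
  obtain ⟨W1, hW1⟩ : ∃ W1 : ℝ → ℝ, W1 = fun y => r * deriv w (r * y) := ⟨_, rfl⟩
  have hWd : ∀ y, HasDerivAt W (W1 y) y := by
    intro y
    rw [hW, hW1]
    have h1 : HasDerivAt (fun y : ℝ => r * y) r y := by
      simpa using (hasDerivAt_id y).const_mul r
    refine ((hd (r * y)).hasDerivAt.comp y h1).congr_deriv ?_
    ring
  have iW : IntegrableOn (fun y => W y ^ 2) (Set.Ioi 0) := by
    rw [hW]; exact (hi.comp_mul_left' hr0.ne').integrableOn
  have iW1 : IntegrableOn (fun y => W1 y ^ 2) (Set.Ioi 0) := by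
    rw [hW1]
    have := ((hi1.comp_mul_left' hr0.ne').const_mul (r ^ 2)).integrableOn (s := Set.Ioi 0)
    simpa only [mul_pow] using this
  have hm : Measurable W1 := by
    rw [hW1]
    have := measurable_deriv w
    fun_prop
  have hmain := half_line W W1 hWd (by rw [hW]; simp [hw0]) iW iW1 hm
  have iP := int_P W W1 hWd iW
  have E1 : ∫ x : ℝ, (deriv w x) ^ 2 = r * ∫ y in Set.Ioi 0, W1 y ^ 2 := by
    rw [even_integral _ (fun x => by rw [hde]), ← hr]
    have : ∀ y, (deriv w (r * y)) ^ 2 = 1/2 * W1 y ^ 2 := by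
      intro y; rw [hW1]; simp only [mul_pow, hr2]; ring
    simp only [this]
    rw [integral_const_mul]; ring
  have E2 : ∫ x : ℝ, ((deriv w x) ^ 2 - Vpot x * (w x) ^ 2) =
      r * ((∫ y in Set.Ioi 0, W1 y ^ 2) - ∫ y in Set.Ioi 0, PS (sS y) * W y ^ 2) := by
    rw [even_integral _ (fun x => by rw [hde, Vpot_neg, hodd]; ring), ← hr, ← integral_sub iW1 iP]
    have : ∀ y, (deriv w (r * y)) ^ 2 - Vpot (r * y) * w (r * y) ^ 2 =
        1/2 * (W1 y ^ 2 - PS (sS y) * W y ^ 2) := by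
      intro y
      rw [hr, Vpot_eq, ← hr, hW1, hW]; simp only [mul_pow, hr2]; ring
    simp only [this]
    rw [integral_const_mul]; ring
  have E3 : ∫ x : ℝ, w x * Z1 x =
      2 * r * c * ∫ y in Set.Ioi 0, ZS (sS y) (zZ y) * W y := by
    rw [even_integral _ (fun x => by rw [Z1_neg, hodd]; ring), ← hr]
    have : ∀ y, w (r * y) * Z1 (r * y) = c * (ZS (sS y) (zZ y) * W y) := by
      intro y
      rw [hr, Z1_eq, ← hr, ← hc, hW]; ring
    simp only [this]
    rw [integral_const_mul]; ring
  rw [E1, E2, E3]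
  obtain ⟨A, hA⟩ : ∃ A, A = ∫ y in Set.Ioi 0, W1 y ^ 2 := ⟨_, rfl⟩
  obtain ⟨B, hB⟩ : ∃ B, B = ∫ y in Set.Ioi 0, PS (sS y) * W y ^ 2 := ⟨_, rfl⟩
  obtain ⟨J, hJ⟩ : ∃ J, J = ∫ y in Set.Ioi 0, ZS (sS y) (zZ y) * W y := ⟨_, rfl⟩
  rw [← hA, ← hB, ← hJ] at hmain
  rw [← hA, ← hB, ← hJ]
  have e : r * (49/4) / (8 * c ^ 2) * (2 * r * c * J) ^ 2 = r * (49/4 * J ^ 2) := by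
    calc _ = r * (49/4) * (4 * r ^ 2 * J ^ 2) / 8 := by field_simp; ring
      _ = _ := by rw [hr2]; ring
  rw [e]
  have h3 : 0 ≤ A - B - 1/101 * A + 49/4 * J ^ 2 := by nlinarith [sq_nonneg J]
  have := mul_nonneg hr0.le h3
  linarith
end
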